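/- arXiv:2201.10631 — 3 statements merged into one kernel-verified Lean document; each statement's English description precedes it below -/
import Mathlib

section
/- Let k ≥ 1 be an integer and let n be a positive integer with k ≤ n/2. For every similarity matrix S ∈ [0,1]^{n×n}, there exist a partition of [n] into 2k+1 pairwise disjoint subsets covering [n], each of size ⌊n/(2k+1)⌋ or ⌈n/(2k+1)⌉, and an assignment M with loads k whose similarity equals Opt_S, such that for every (i,j) ∈ M the indices i and j lie in different subsets of the partition. -/
/-- An assignment with loads `k`: each agent reviews exactly `k` submissions,
each submission receives exactly `k` reviews, and no agent reviews their own submission. -/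
def IsAssignment (n k : ℕ) (M : Finset (Fin n × Fin n)) : Prop :=
  (∀ i : Fin n, (M.filter fun p => p.1 = i).card = k) ∧
  (∀ j : Fin n, (M.filter fun p => p.2 = j).card = k) ∧
  ∀ i : Fin n, (i, i) ∉ M

/-- The total similarity of an assignment. -/
noncomputable def simVal {n : ℕ} (S : Fin n → Fin n → ℝ) (M : Finset (Fin n × Fin n)) : ℝ :=
  ∑ p ∈ M, S p.1 p.2

/-- The optimum similarity over all assignments with loads `k`. -/
noncomputable def OptSim (n k : ℕ) (S : Fin n → Fin n → ℝ) : ℝ :=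
  sSup {x : ℝ | ∃ M : Finset (Fin n × Fin n), IsAssignment n k M ∧ simVal S M = x}

/-- `M` respects the partition `(A₁, A₂)`: each assigned pair is split across the two subsets. -/
def Respects {n : ℕ} (A₁ A₂ : Finset (Fin n)) (M : Finset (Fin n × Fin n)) : Prop :=
  ∀ p ∈ M, (p.1 ∈ A₁ ∧ p.2 ∈ A₂) ∨ (p.1 ∈ A₂ ∧ p.2 ∈ A₁)

/-!
An optimal assignment `M` gives the conflict graph on `[n]` in which `i` and `j` are adjacent when
one of them reviews the other's submission. Its degrees are at most `2k`, so the Hajnal–Szemerédi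
theorem provides a proper colouring with `2k + 1` classes of almost equal size.

For Hajnal–Szemerédi we follow Kierstead and Kostochka. Edges are added one vertex at a time, so we
have a proper colouring in which a class `a` is one vertex too small and a class `b` one vertex too
large. A colour is accessible if vertices can be shifted along a path of classes from it to `a`; if
`b` is accessible, then shifting along such a path finishes the proof. Otherwise take a terminal
family `T`, the set of accessible colours cut off from `a` by a suitable colour, and call a
neighbour `z` of `y` solo if it is the only neighbour of `y` in the class of `z`. If some `z` in `T`
that is solo for an inaccessible `y` can be moved to another accessible class, move it and put `y`
in its place; the remaining inaccessible vertices are recoloured by induction. If no such `z` can be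
moved, a double count gives some `z` that is solo for two nonadjacent vertices `y₁`, `y₂`. Moving
`z` to an inaccessible class and `y₁` into its place then makes the class of `y₂` accessible as
well, so the set of accessible colours grows.
-/

namespace EquitableColoring

open Finset Function Relation

universe u v

section Reaches

variable {C : Type*} {R : C → C → Prop} {E F : Set C} {a c : C}

/-- `c` reaches `a` by a walk in the digraph `R` each of whose steps ends in `E`. The starting
point `c` need not lie in `E`, so with `E = {w}ᶜ` the walk may start at `w` but never enters it. -/
def Reaches (R : C → C → Prop) (E : Set C) : C → C → Prop :=
  ReflTransGen fun c d => R c d ∧ d ∈ E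

lemma Reaches.mono (hEF : E ⊆ F) (h : Reaches R E c a) : Reaches R F c a :=
  ReflTransGen.mono (fun _ _ hstep => ⟨hstep.1, hEF hstep.2⟩) _ _ h

lemma Reaches.sdiff_start (h : Reaches R E c a) : Reaches R (E \ {c}) c a := by
  have key : ∀ d, Reaches R E d a → Reaches R (E \ {c}) d a ∨ Reaches R (E \ {c}) c a := by
    intro d hd
    induction hd using ReflTransGen.head_induction_on with
    | refl => exact .inl .refl
    | @head d e hde _ ih =>
      rcases ih with he | hc
      · by_cases hec : e = c
        · exact .inr (hec ▸ he)
        · exact .inl (.head ⟨hde.1, hde.2, hec⟩ he)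
      · exact .inr hc
  exact (key c h).elim id id

/-- The family `T` of all points that are cut off from `a` by deleting the point `u`, in the case
where deleting a point of `T` cuts off nothing else. -/
structure IsTerminalFamily (R : C → C → Prop) (a : C) (T : Finset C) (u : C) : Prop where
  nonempty : T.Nonempty
  root_notMem : a ∉ T
  reaches : ∀ c ∈ T, Reaches R Set.univ c a
  exit_reaches : Reaches R Set.univ u a
  exit_notMem : u ∉ T
  reaches_avoiding : ∀ w ∈ T, ∀ c, Reaches R Set.univ c a → Reaches R {w}ᶜ c a
  eq_exit : ∀ w ∈ T, ∀ d ∉ T, Reaches R Set.univ d a → R w d → d = u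

theorem exists_isTerminalFamily [Finite C] (hca : c ≠ a) (hc : Reaches R Set.univ c a) :
    ∃ T u, IsTerminalFamily R a T u := by
  classical
  have := Fintype.ofFinite C
  let cut : C → Finset C := fun u => {d | Reaches R Set.univ d a ∧ ¬ Reaches R {u}ᶜ d a}
  have mem_cut {u d : C} : d ∈ cut u ↔ Reaches R Set.univ d a ∧ ¬ Reaches R {u}ᶜ d a := by
    simp [cut]
  have notMem_cut_self (u : C) : u ∉ cut u := fun h =>
    (mem_cut.1 h).2 ((mem_cut.1 h).1.sdiff_start.mono fun _ hd => hd.2)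
  have hc_cut : c ∈ cut a := mem_cut.2 ⟨hc, fun h => by
    rcases ReflTransGen.cases_tail h with h | ⟨d, -, hd⟩
    exacts [hca h.symm, hd.2 rfl]⟩
  obtain ⟨u, hu, hmin⟩ := exists_min_image
    ({u | Reaches R Set.univ u a ∧ (cut u).Nonempty} : Finset C) (fun u => #(cut u))
    ⟨a, by simpa using ⟨.refl, c, hc_cut⟩⟩
  simp only [mem_filter, mem_univ, true_and] at hu hmin
  refine ⟨cut u, u, hu.2, fun h => (mem_cut.1 h).2 .refl, fun d hd => (mem_cut.1 hd).1, hu.1,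
    notMem_cut_self u, fun w hw d hd => ?_, fun w hw d hdT hd hwd => ?_⟩
  · by_contra hdw
    have avoid : ∀ e, Reaches R {u}ᶜ e a → Reaches R {w}ᶜ e a := by
      intro e he
      induction he using ReflTransGen.head_induction_on with
      | refl => exact .refl
      | @head e e' hstep he' ih =>
        refine .head ⟨hstep.1, ?_⟩ ih
        rintro rfl
        exact (mem_cut.1 hw).2 he'
    have hsub : cut w ⊂ cut u := by
      refine (ssubset_iff_of_subset fun e he => ?_).2 ⟨w, hw, notMem_cut_self w⟩
      exact mem_cut.2 ⟨(mem_cut.1 he).1, fun h => (mem_cut.1 he).2 (avoid e h)⟩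
    exact (card_lt_card hsub).not_ge (hmin w ⟨(mem_cut.1 hw).1, d, mem_cut.2 ⟨hd, hdw⟩⟩)
  · by_contra hdu
    have hd_avoid : Reaches R {u}ᶜ d a := by_contra fun h => hdT (mem_cut.2 ⟨hd, h⟩)
    exact (mem_cut.1 hw).2 (.head ⟨hwd, hdu⟩ hd_avoid)

end Reaches

variable {V : Type u} {C : Type v} {G : SimpleGraph V} {f : V → C} {a b c d : C} {s : ℕ}

/-- `f` is a proper colouring of `G`. It is kept separate from `SimpleGraph.Coloring` because
recoloured functions are built first and shown to be proper afterwards. -/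
def IsProper (G : SimpleGraph V) (f : V → C) : Prop :=
  ∀ ⦃x y⦄, G.Adj x y → f x ≠ f y

lemma IsProper.mono {H : SimpleGraph V} (hHG : H ≤ G) (hf : IsProper G f) : IsProper H f :=
  fun _ _ hxy => hf (hHG hxy)

lemma IsProper.update [DecidableEq V] {x : V} (hf : IsProper (G.deleteIncidenceSet x) f)
    (hd : ∀ w, G.Adj x w → f w ≠ d) : IsProper G (update f x d) := by
  intro w w' hww'
  by_cases hw : w = x
  · subst hw
    rw [update_self, update_of_ne hww'.ne']
    exact (hd w' hww').symm
  by_cases hw' : w' = x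
  · subst hw'
    rw [update_self, update_of_ne hw]
    exact hd w hww'.symm
  · rw [update_of_ne hw, update_of_ne hw']
    exact hf (G.deleteIncidenceSet_adj.2 ⟨hww', hw, hw'⟩)

section ClassSizes

variable [Fintype V] [DecidableEq C]

/-- `G` has a proper colouring with colours in `C` all of whose classes have `s` vertices. -/
def HasUniformColoring (G : SimpleGraph V) (C : Type v) [DecidableEq C] (s : ℕ) : Prop :=
  ∃ f : V → C, IsProper G f ∧ ∀ c, #{x | f x = c} = s

/-- All colour classes of `f` have size `s`, except that class `a` misses one vertex and
class `b` has one extra vertex; these cancel when `a = b`. -/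
def IsNearlyUniform (s : ℕ) (f : V → C) (a b : C) : Prop :=
  ∀ c, #{x | f x = c} + (if c = a then 1 else 0) = s + if c = b then 1 else 0

lemma card_filter_update_eq [DecidableEq V] (f : V → C) (x : V) (c d : C) :
    #{w | update f x d w = c} + (if c = f x then 1 else 0) =
      #{w | f w = c} + if c = d then 1 else 0 := by
  have hrest : ∑ w ∈ univ.erase x, (if update f x d w = c then 1 else 0) =
      ∑ w ∈ univ.erase x, if f w = c then 1 else 0 :=
    sum_congr rfl fun w hw => by rw [update_of_ne (ne_of_mem_erase hw)]
  simp only [card_filter, ← add_sum_erase univ _ (mem_univ x), hrest, update_self,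
    eq_comm (a := c)]
  omega

lemma IsNearlyUniform.update [DecidableEq V] {x : V} (hf : IsNearlyUniform s f a (f x)) (d : C) :
    IsNearlyUniform s (update f x d) a d := fun c => by
  have := card_filter_update_eq f x c d
  have := hf c
  omega

lemma IsNearlyUniform.card_eq (hf : IsNearlyUniform s f a b) (hca : c ≠ a) (hcb : c ≠ b) :
    #{x | f x = c} = s := by
  simpa [hca, hcb] using hf c

lemma IsNearlyUniform.hasUniformColoring (hf : IsNearlyUniform s f a a) (hG : IsProper G f) :
    HasUniformColoring G C s :=
  ⟨f, hG, fun c => Nat.add_right_cancel (hf c)⟩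

lemma card_filter_mem {T : Finset C} {p : V → Prop} [DecidablePred p] :
    #{x | f x ∈ T ∧ p x} = ∑ c ∈ T, #{x | f x = c ∧ p x} := by
  rw [card_eq_sum_card_fiberwise (f := f) (t := T) fun x hx => (mem_filter.1 hx).2.1]
  refine sum_congr rfl fun c hc => ?_
  rw [filter_filter]
  congr 1
  ext x
  grind

lemma IsNearlyUniform.card_filter_notMem [Fintype C] {A : Finset C} (hf : IsNearlyUniform s f a b)
    (ha : a ∈ A) (hb : b ∉ A) : #{x | f x ∉ A} = #Aᶜ * s + 1 := by
  have hsize : ∀ c ∈ Aᶜ, #{x | f x = c} = s + if c = b then 1 else 0 := fun c hc => by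
    rw [← hf c, if_neg (ne_of_mem_of_not_mem ha (mem_compl.1 hc)).symm, add_zero]
  have hsum := card_filter_mem (f := f) (T := Aᶜ) (p := fun _ => True)
  simp only [mem_compl, and_true] at hsum
  rw [hsum, sum_congr rfl hsize, sum_add_distrib, sum_const, smul_eq_mul, sum_ite_eq',
    if_pos (mem_compl.2 hb)]

end ClassSizes

section Movable

/-- Some neighbour of `x` has colour `c`. -/
def Sees (G : SimpleGraph V) (f : V → C) (x : V) (c : C) : Prop :=
  ∃ w, G.Adj x w ∧ f w = c

/-- Some vertex of colour `c` can be recoloured with `d`. This is the digraph on the colours along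
which vertices are shifted. -/
def Movable (G : SimpleGraph V) (f : V → C) (c d : C) : Prop :=
  ∃ x, f x = c ∧ ¬ Sees G f x d

lemma Movable.congr {g : V → C} (h : Movable G f c d) (hc : ∀ x, f x = c → g x = c)
    (hd : ∀ x, g x = d → f x = d) : Movable G g c d := by
  obtain ⟨x, hx, hsees⟩ := h
  exact ⟨x, hc x hx, fun ⟨w, hw, hwd⟩ => hsees ⟨w, hw, hd w hwd⟩⟩

/- The walk from the large class `b` to the small class `a` is made to avoid both `b` and its own
second colour `d`. Shifting a vertex from `b` to `d` then leaves the rest of the walk intact. -/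
theorem hasUniformColoring_of_reaches [Fintype V] [DecidableEq C] [Finite C] {E : Set C}
    (hG : IsProper G f) (hf : IsNearlyUniform s f a b) (hb : Reaches (Movable G f) E b a) :
    HasUniformColoring G C s := by
  classical
  induction E using WellFoundedLT.induction generalizing f b with
  | ind E ih =>
  rcases ReflTransGen.cases_head hb.sdiff_start with rfl | ⟨d, ⟨⟨x, rfl, hx⟩, hdE, hdb⟩, hd⟩
  · exact hf.hasUniformColoring hG
  have hG' : IsProper G (update f x d) :=
    (hG.mono (G.deleteIncidenceSet_le x)).update fun w hw hwd => hx ⟨w, hw, hwd⟩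
  have hreach : ∀ c, c ≠ f x → Reaches (Movable G f) ((E \ {f x}) \ {d}) c a →
      Reaches (Movable G (update f x d)) ((E \ {f x}) \ {d}) c a := by
    intro c hc h
    induction h using ReflTransGen.head_induction_on with
    | refl => exact .refl
    | @head c e hstep _ ih' =>
      refine .head ⟨hstep.1.congr (fun w hw => ?_) fun w hw => ?_, hstep.2⟩ (ih' hstep.2.1.2)
      · rwa [update_of_ne]
        rintro rfl
        exact hc hw.symm
      · by_cases hwx : w = x
        · subst hwx
          rw [update_self] at hw
          exact absurd hw.symm hstep.2.2
        · rwa [update_of_ne hwx] at hw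
  have hssub : (E \ {f x}) \ {d} < E :=
    (Set.ssubset_iff_of_subset (Set.sdiff_subset.trans Set.sdiff_subset)).2
      ⟨d, hdE, fun h => h.2 rfl⟩
  exact ih _ hssub hG' (hf.update d) (hreach d hdb (Reaches.sdiff_start hd))

end Movable

section Accessible

variable [Fintype C]

open Classical in
/-- The colours that reach `a` in the digraph `Movable G f`, intended for the small class `a` of a
nearly uniform colouring. -/
noncomputable def accessible (G : SimpleGraph V) (f : V → C) (a : C) : Finset C :=
  {c | Reaches (Movable G f) Set.univ c a}

lemma mem_accessible : c ∈ accessible G f a ↔ Reaches (Movable G f) Set.univ c a := by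
  simp [accessible]

lemma self_mem_accessible : a ∈ accessible G f a :=
  mem_accessible.2 .refl

lemma mem_accessible_of_movable (h : Movable G f c d) (hd : d ∈ accessible G f a) :
    c ∈ accessible G f a :=
  mem_accessible.2 (.head ⟨h, trivial⟩ (mem_accessible.1 hd))

lemma sees_of_mem_accessible {y : V} (hy : f y ∉ accessible G f a) (hc : c ∈ accessible G f a) :
    Sees G f y c :=
  by_contra fun h => hy (mem_accessible_of_movable ⟨y, rfl, h⟩ hc)

lemma IsTerminalFamily.subset_accessible {T : Finset C} {u : C}
    (hT : IsTerminalFamily (Movable G f) a T u) : T ⊆ accessible G f a :=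
  fun c hc => mem_accessible.2 (hT.reaches c hc)

lemma IsTerminalFamily.card_class [Fintype V] [DecidableEq C] {T : Finset C} {u : C}
    (hT : IsTerminalFamily (Movable G f) a T u) (hf : IsNearlyUniform s f a b)
    (hb : b ∉ accessible G f a) (hc : c ∈ T) : #{x | f x = c} = s :=
  hf.card_eq (ne_of_mem_of_not_mem hc hT.root_notMem)
    (ne_of_mem_of_not_mem (hT.subset_accessible hc) hb)

end Accessible

lemma exists_isIndepSet_card_le_sum (G : SimpleGraph V) [DecidableRel G.Adj] (X : Finset V) :
    ∃ I ⊆ X, G.IsIndepSet I ∧ #X ≤ ∑ y ∈ I, (#{w ∈ X | G.Adj y w} + 1) := by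
  classical
  obtain ⟨I, -, hI⟩ :=
    ({I ∈ X.powerset | G.IsIndepSet I} : Finset (Finset V)).exists_le_maximal (a := ∅) (by simp)
  obtain ⟨hIX, hind⟩ : I ⊆ X ∧ G.IsIndepSet I := by simpa using hI.prop
  refine ⟨I, hIX, hind, ?_⟩
  have hcover : X ⊆ I.biUnion fun y => insert y {w ∈ X | G.Adj y w} := by
    intro v hv
    by_contra! hnot
    simp only [mem_biUnion, mem_insert, mem_filter, not_exists, not_and, not_or] at hnot
    have hvI : v ∉ I := fun h => (hnot v h).1 rfl
    have hind' : G.IsIndepSet (insert v (I : Set V)) :=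
      hind.insert fun y hy _ => ⟨fun h => (hnot y hy).2 hv h.symm, (hnot y hy).2 hv⟩
    refine hvI (hI.le_of_ge (y := insert v I) ?_ (subset_insert v I) (mem_insert_self v I))
    simpa using ⟨insert_subset hv hIX, hind'⟩
  exact (card_le_card hcover).trans
    (card_biUnion_le.trans (sum_le_sum fun y _ => card_insert_le _ _))

section Counting

variable [Fintype V] [DecidableRel G.Adj] [DecidableEq C] {A S T : Finset C} {x y z : V}

/-- The number of neighbours of `x` whose colour is not in `A`. -/
def outsideDegree (G : SimpleGraph V) [DecidableRel G.Adj] (f : V → C) (A : Finset C) (x : V) : ℕ :=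
  #{w | f w ∉ A ∧ G.Adj x w}

lemma outsideDegree_add_card_filter_mem :
    outsideDegree G f A x + #{w | f w ∈ A ∧ G.Adj x w} = G.degree x := by
  rw [← G.card_neighborFinset_eq_degree, G.neighborFinset_eq_filter, outsideDegree, add_comm,
    ← card_filter_add_card_filter_not (s := {w | G.Adj x w}) (fun w => f w ∈ A)]
  simp only [filter_filter, and_comm]

lemma outsideDegree_add_card_le_degree (hSA : S ⊆ A) (hS : ∀ c ∈ S, Sees G f x c) :
    outsideDegree G f A x + #S ≤ G.degree x := by
  rw [← outsideDegree_add_card_filter_mem (A := A)]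
  refine Nat.add_le_add_left (card_le_card_of_surjOn f fun c hc => ?_) _
  obtain ⟨w, hxw, rfl⟩ := hS c hc
  exact ⟨w, by simpa using ⟨hSA hc, hxw⟩, rfl⟩

/-- `z` is the only neighbour of `y` in the class of `z`. -/
def Solo (G : SimpleGraph V) (f : V → C) (y z : V) : Prop :=
  G.Adj y z ∧ ∀ w, G.Adj y w → f w = f z → w = z

instance [DecidableEq V] : DecidableRel (Solo G f) := fun _ _ => inferInstanceAs (Decidable (_ ∧ _))

/-- No vertex `z` in the classes `T` that is the solo neighbour of some vertex outside the classes
`A` can be moved to another class of `A`. -/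
def SoloStuck (G : SimpleGraph V) (f : V → C) (A T : Finset C) : Prop :=
  ∀ ⦃y z⦄, f y ∉ A → f z ∈ T → Solo G f y z → ∀ c ∈ A, c ≠ f z → Sees G f z c

lemma sum_card_filter_and_comm (X : Finset V) (q : V → Prop) [DecidablePred q]
    (r : V → V → Prop) [DecidableRel r] :
    ∑ y ∈ X, #{z | q z ∧ r y z} = ∑ z with q z, #{y ∈ X | r y z} := by
  simpa only [bipartiteAbove, bipartiteBelow, filter_filter] using
    sum_card_bipartiteAbove_eq_sum_card_bipartiteBelow (s := X) (t := {z | q z}) r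

lemma two_le_card_adj_add_card_solo [DecidableEq V] (h : Sees G f y c) :
    2 ≤ #{z | f z = c ∧ G.Adj y z} + #{z | f z = c ∧ Solo G f y z} := by
  obtain ⟨z, hyz, rfl⟩ := h
  by_cases hsolo : Solo G f y z
  · have hadj : 0 < #{w | f w = f z ∧ G.Adj y w} := card_pos.2 ⟨z, by simpa using hyz⟩
    have : 0 < #{w | f w = f z ∧ Solo G f y w} := card_pos.2 ⟨z, by simpa using hsolo⟩
    omega
  · obtain ⟨w, hyw, hwz, hne⟩ : ∃ w, G.Adj y w ∧ f w = f z ∧ w ≠ z := by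
      simpa [Solo, hyz] using hsolo
    exact le_add_right (one_lt_card.2 ⟨w, by simp [hwz, hyw], z, by simp [hyz], hne⟩)

variable [Fintype C] {u : C}

lemma outsideDegree_lt_card_compl (hdeg : G.degree x < Fintype.card C)
    (hx : ∀ c ∈ A, Sees G f x c) : outsideDegree G f A x < #Aᶜ := by
  have := outsideDegree_add_card_le_degree Subset.rfl hx
  have := card_add_card_compl A
  omega

lemma outsideDegree_le_card_compl (hdeg : G.degree x < Fintype.card C) (hxA : f x ∈ A)
    (hx : ∀ c ∈ A, c ≠ f x → Sees G f x c) : outsideDegree G f A x ≤ #Aᶜ := by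
  have := outsideDegree_add_card_le_degree (erase_subset (f x) A) fun c hc =>
    hx c (mem_of_mem_erase hc) (ne_of_mem_erase hc)
  have := card_erase_add_one hxA
  have := card_add_card_compl A
  omega

lemma outsideDegree_le_card_compl_add_card (hdeg : G.degree x < Fintype.card C) (huA : u ∈ A)
    (huT : u ∉ T) (hTA : T ⊆ A) (hx : ∀ c ∈ A, c ∉ T → c ≠ u → Sees G f x c) :
    outsideDegree G f A x ≤ #Aᶜ + #T := by
  have hsub : (A \ T).erase u ⊆ A := (erase_subset u _).trans sdiff_subset
  have := outsideDegree_add_card_le_degree hsub fun c hc =>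
    have ⟨hcA, hcT⟩ := mem_sdiff.1 (mem_of_mem_erase hc)
    hx c hcA hcT (ne_of_mem_erase hc)
  have := card_erase_add_one (mem_sdiff.2 ⟨huA, huT⟩)
  have := card_sdiff_add_card_eq_card hTA
  have := card_add_card_compl A
  omega

lemma exists_mem_accessible_ne (hdeg : ∀ x, G.degree x < Fintype.card C)
    (hf : IsNearlyUniform s f a b) (hb : b ∉ accessible G f a) :
    ∃ c ∈ accessible G f a, c ≠ a := by
  classical
  by_contra! h
  have hacc : accessible G f a = {a} :=
    eq_singleton_iff_unique_mem.2 ⟨self_mem_accessible, h⟩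
  have hcover : ({x | f x ∉ accessible G f a} : Finset V) ⊆
      ({z | f z = a} : Finset V).biUnion fun z => G.neighborFinset z := by
    intro y hy
    obtain ⟨w, hyw, hwa⟩ := sees_of_mem_accessible (mem_filter.1 hy).2 self_mem_accessible
    exact mem_biUnion.2 ⟨w, by simpa using hwa, by simpa using hyw.symm⟩
  have hle := (card_le_card hcover).trans <| card_biUnion_le_card_mul _ _ (Fintype.card C - 1)
    fun z _ => Nat.le_sub_one_of_lt (hdeg z)
  have hlarge := hf.card_filter_notMem self_mem_accessible hb
  have hsmall : #{x | f x = a} + 1 = s := by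
    simpa [ne_of_mem_of_not_mem self_mem_accessible hb] using hf a
  rw [hlarge, hacc, card_compl, card_singleton, ← hsmall] at hle
  nlinarith

section Solo

variable [DecidableEq V]

lemma outsideDegree_add_card_solo_le (hdeg : G.degree z < Fintype.card C)
    (hstuck : SoloStuck G f A T) (hTA : T ⊆ A) (hz : f z ∈ T)
    (hout : outsideDegree G f A z ≤ 2 * #Aᶜ) :
    outsideDegree G f A z + #{y | f y ∉ A ∧ Solo G f y z} ≤ 2 * #Aᶜ := by
  rcases eq_empty_or_nonempty ({y | f y ∉ A ∧ Solo G f y z} : Finset V) with hempty | ⟨y, hy⟩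
  · simpa [hempty] using hout
  · obtain ⟨hyA, hyz⟩ := (mem_filter.1 hy).2
    have hle := outsideDegree_le_card_compl hdeg (hTA hz) (hstuck hyA hz hyz)
    have hsolo : #{y | f y ∉ A ∧ Solo G f y z} ≤ outsideDegree G f A z :=
      card_le_card <| monotone_filter_right _ fun w _ hw => ⟨hw.1, hw.2.1.symm⟩
    omega

lemma card_add_outsideDegree_lt (hdeg : G.degree y < Fintype.card C) (hTA : T ⊆ A)
    (hy : ∀ c ∈ A, Sees G f y c) :
    #T + outsideDegree G f A y < #Aᶜ + #{z | f z ∈ T ∧ Solo G f y z} := by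
  have hAT : #(A \ T) ≤ ∑ c ∈ A \ T, #{z | f z = c ∧ G.Adj y z} := by
    rw [card_eq_sum_ones]
    refine sum_le_sum fun c hc => card_pos.2 ?_
    obtain ⟨z, hyz, hzc⟩ := hy c (mem_sdiff.1 hc).1
    exact ⟨z, by simpa using ⟨hzc, hyz⟩⟩
  have hT : #T * 2 ≤ ∑ c ∈ T, (#{z | f z = c ∧ G.Adj y z} + #{z | f z = c ∧ Solo G f y z}) :=
    card_nsmul_le_sum _ _ _ fun c hc => two_le_card_adj_add_card_solo (hy c (hTA hc))
  have hsplit := outsideDegree_add_card_filter_mem (G := G) (f := f) (A := A) (x := y)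
  rw [sum_add_distrib, ← card_filter_mem (p := Solo G f y)] at hT
  rw [card_filter_mem, ← sum_sdiff hTA] at hsplit
  have := card_sdiff_add_card_eq_card hTA
  have := card_add_card_compl A
  omega

end Solo

section TerminalFamily

variable (hdeg : ∀ x, G.degree x < Fintype.card C) (hf : IsNearlyUniform s f a b)
  (hb : b ∉ accessible G f a) (hT : IsTerminalFamily (Movable G f) a T u)
  (hstuck : SoloStuck G f (accessible G f a) T)

include hdeg hT in
lemma IsTerminalFamily.outsideDegree_le (hz : f z ∈ T) :
    outsideDegree G f (accessible G f a) z ≤ #(accessible G f a)ᶜ + #T :=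
  outsideDegree_le_card_compl_add_card (hdeg z) (mem_accessible.2 hT.exit_reaches) hT.exit_notMem
    hT.subset_accessible fun c hc hcT hcu => by_contra fun h =>
      hcu (hT.eq_exit _ hz c hcT (mem_accessible.1 hc) ⟨z, rfl, h⟩)

include hdeg hf hb hT hstuck in
lemma IsTerminalFamily.card_compl_accessible_lt : #(accessible G f a)ᶜ < #T := by
  classical
  by_contra! hle
  set A := accessible G f a
  obtain ⟨c, hc⟩ := hT.nonempty
  have hcount := calc
    (#Aᶜ * s + 1) * 2 = ∑ y with f y ∉ A, 2 := by
        rw [sum_const, hf.card_filter_notMem self_mem_accessible hb, smul_eq_mul]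
    _ ≤ ∑ y with f y ∉ A, (#{z | f z = c ∧ G.Adj y z} + #{z | f z = c ∧ Solo G f y z}) :=
        sum_le_sum fun y hy => two_le_card_adj_add_card_solo <|
          sees_of_mem_accessible (mem_filter.1 hy).2 (hT.subset_accessible hc)
    _ = ∑ z with f z = c, (outsideDegree G f A z + #{y | f y ∉ A ∧ Solo G f y z}) := by
        rw [sum_add_distrib, sum_card_filter_and_comm, sum_card_filter_and_comm, sum_add_distrib]
        simp only [filter_filter, outsideDegree, fun y z => G.adj_comm z y]
    _ ≤ ∑ z with f z = c, 2 * #Aᶜ := by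
        refine sum_le_sum fun z hz => ?_
        have hzT : f z ∈ T := (mem_filter.1 hz).2.symm ▸ hc
        refine outsideDegree_add_card_solo_le (hdeg z) hstuck hT.subset_accessible hzT ?_
        have : outsideDegree G f A z ≤ #Aᶜ + #T := hT.outsideDegree_le hdeg hzT
        omega
    _ = s * (2 * #Aᶜ) := by rw [sum_const, hT.card_class hf hb hc, smul_eq_mul]
  linarith

include hdeg hf hb in
lemma exists_isIndepSet_inaccessible :
    ∃ I : Finset V, (∀ y ∈ I, f y ∉ accessible G f a) ∧ G.IsIndepSet I ∧ s < #I ∧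
      #(accessible G f a)ᶜ * s < ∑ y ∈ I, (outsideDegree G f (accessible G f a) y + 1) := by
  set A := accessible G f a
  obtain ⟨I, hIX, hind, hI⟩ := exists_isIndepSet_card_le_sum G {y | f y ∉ A}
  have hIA : ∀ y ∈ I, f y ∉ A := fun y hy => (mem_filter.1 (hIX hy)).2
  have hlarge : #{y | f y ∉ A} = #Aᶜ * s + 1 := hf.card_filter_notMem self_mem_accessible hb
  replace hI : #Aᶜ * s < ∑ y ∈ I, (outsideDegree G f A y + 1) := by
    simpa only [filter_filter, hlarge, outsideDegree, Order.add_one_le_iff] using hI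
  have hle : ∑ y ∈ I, (outsideDegree G f A y + 1) ≤ #I * #Aᶜ :=
    sum_le_card_nsmul _ _ _ fun y hy => outsideDegree_lt_card_compl (hdeg y) fun _ =>
      sees_of_mem_accessible (hIA y hy)
  have hsI : #Aᶜ * s < #Aᶜ * #I := by linarith
  exact ⟨I, hIA, hind, lt_of_mul_lt_mul_left hsI (Nat.zero_le _), hI⟩

include hdeg hf hb hT hstuck in
lemma IsTerminalFamily.exists_solo_pair :
    ∃ z y₁ y₂, f z ∈ T ∧ f y₁ ∉ accessible G f a ∧ f y₂ ∉ accessible G f a ∧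
      Solo G f y₁ z ∧ Solo G f y₂ z ∧ y₁ ≠ y₂ ∧ ¬ G.Adj y₁ y₂ := by
  classical
  set A := accessible G f a
  obtain ⟨I, hIA, hind, hsI, hI⟩ : ∃ I : Finset V, (∀ y ∈ I, f y ∉ A) ∧ G.IsIndepSet I ∧ s < #I ∧
      #Aᶜ * s < ∑ y ∈ I, (outsideDegree G f A y + 1) := exists_isIndepSet_inaccessible hdeg hf hb
  by_contra! hpair
  have hone : ∀ z, f z ∈ T → #{y ∈ I | Solo G f y z} ≤ 1 := fun z hz =>
    card_le_one.2 fun y₁ h₁ y₂ h₂ => by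
      rw [mem_filter] at h₁ h₂
      by_contra hne
      exact hind h₁.1 h₂.1 hne
        (hpair z y₁ y₂ hz (hIA y₁ h₁.1) (hIA y₂ h₂.1) h₁.2 h₂.2 hne)
  have hsolo : ∑ y ∈ I, #{z | f z ∈ T ∧ Solo G f y z} ≤ #T * s := calc
    _ = ∑ z with f z ∈ T, #{y ∈ I | Solo G f y z} :=
        sum_card_filter_and_comm I (f · ∈ T) (Solo G f)
    _ ≤ ∑ z with f z ∈ T, 1 := sum_le_sum fun z hz => hone z (mem_filter.1 hz).2
    _ = #T * s := by
        rw [← card_eq_sum_ones]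
        simpa [sum_congr rfl fun _ hc => hT.card_class hf hb hc] using
          card_filter_mem (f := f) (T := T) (p := fun _ => True)
  have hlow : ∑ y ∈ I, (#T + (outsideDegree G f A y + 1)) ≤
      ∑ y ∈ I, (#Aᶜ + #{z | f z ∈ T ∧ Solo G f y z}) :=
    sum_le_sum fun y hy => card_add_outsideDegree_lt (hdeg y) hT.subset_accessible fun _ =>
      sees_of_mem_accessible (hIA y hy)
  have hrearr : s * #T + #I * #Aᶜ ≤ s * #Aᶜ + #I * #T :=
    mul_add_mul_le_mul_add_mul hsI.le (hT.card_compl_accessible_lt hdeg hf hb hstuck).le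
  simp only [sum_add_distrib, sum_const, smul_eq_mul] at hI hlow
  linarith

end TerminalFamily

end Counting

section Recoloring

variable {g : V → C} {A : Finset C} {x y z : V}

/-- The colouring `g` has the same classes as `f` in `A`, and on the other vertices except `y` it is
proper with classes of size `s`. The colour of `y` under `g` is outside `A` and otherwise
irrelevant. -/
structure IsRecoloring [Fintype V] [DecidableEq C] (G : SimpleGraph V) (s : ℕ) (a : C)
    (A : Finset C) (y : V) (f g : V → C) : Prop where
  eq_iff : ∀ c ∈ A, ∀ x, g x = c ↔ f x = c
  isProper : IsProper (G.deleteIncidenceSet y) g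
  isNearlyUniform : IsNearlyUniform s g a (g y)

/-- The colouring in which `y` takes over the colour of `z`, and `z` gets the colour `c` instead. -/
def displace [DecidableEq V] (g : V → C) (y z : V) (c : C) : V → C :=
  update (update g y (g z)) z c

lemma displace_apply_of_ne [DecidableEq V] (hxy : x ≠ y) (hxz : x ≠ z) :
    displace g y z c x = g x := by
  rw [displace, update_of_ne hxz, update_of_ne hxy]

namespace IsRecoloring

variable [Fintype V] [DecidableEq C]

section

variable (hg : IsRecoloring G s a A y f g)
include hg

lemma apply_eq (hx : f x ∈ A) : g x = f x :=
  (hg.eq_iff _ hx x).2 rfl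

lemma apply_notMem (hx : f x ∉ A) : g x ∉ A :=
  fun h => hx ((hg.eq_iff _ h x).1 rfl ▸ h)

variable [DecidableEq V]

lemma isProper_displace (hz : f z ∈ A) (hyz : Solo G f y z) (hcz : c ≠ f z)
    (hfree : ∀ w, G.Adj z w → w ≠ y → g w ≠ c) : IsProper G (displace g y z c) := by
  refine IsProper.update (IsProper.update (hg.isProper.mono fun v w hvw => ?_) ?_) fun w hzw => ?_
  · simp only [SimpleGraph.deleteIncidenceSet_adj] at hvw ⊢
    exact ⟨hvw.1.1, hvw.2⟩
  · intro w hyw hwz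
    obtain ⟨hyw, -, hne⟩ := SimpleGraph.deleteIncidenceSet_adj.1 hyw
    rw [hg.apply_eq hz, hg.eq_iff _ hz] at hwz
    exact hne (hyz.2 w hyw hwz)
  · by_cases hwy : w = y
    · rw [hwy, update_self, hg.apply_eq hz]
      exact hcz.symm
    · rw [update_of_ne hwy]
      exact hfree w hzw hwy

lemma isNearlyUniform_displace (hyz : y ≠ z) : IsNearlyUniform s (displace g y z c) a c := by
  refine IsNearlyUniform.update ?_ c
  rw [update_of_ne hyz.symm]
  exact hg.isNearlyUniform.update (g z)

lemma movable_displace (hy : f y ∉ A) (hz : f z ∈ A) (hx : f x ∈ A) (hxz : x ≠ z) (hd : d ∈ A)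
    (hdz : d ≠ f z) (hdc : d ≠ c) (hxd : ¬ Sees G f x d) :
    Movable G (displace g y z c) (f x) d := by
  have hxy : x ≠ y := fun h => hy (h ▸ hx)
  refine ⟨x, by rw [displace_apply_of_ne hxy hxz, hg.apply_eq hx], fun ⟨w, hxw, hwd⟩ => ?_⟩
  by_cases hwz : w = z
  · rw [hwz, displace, update_self] at hwd
    exact hdc hwd.symm
  by_cases hwy : w = y
  · rw [hwy, displace, update_of_ne (hwy ▸ hwz), update_self, hg.apply_eq hz] at hwd
    exact hdz hwd.symm
  · rw [displace_apply_of_ne hwy hwz, hg.eq_iff d hd] at hwd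
    exact hxd ⟨w, hxw, hwd⟩

lemma movable_displace_of_solo (hz : f z ∈ A) (hxz : Solo G f x z) (hxy : x ≠ y)
    (hnadj : ¬ G.Adj x y) (hcz : c ≠ f z) : Movable G (displace g y z c) (g x) (f z) := by
  refine ⟨x, displace_apply_of_ne hxy hxz.1.ne, fun ⟨w, hxw, hwz⟩ => ?_⟩
  by_cases hw_z : w = z
  · rw [hw_z, displace, update_self] at hwz
    exact hcz hwz
  by_cases hw_y : w = y
  · exact hnadj (hw_y ▸ hxw)
  · rw [displace_apply_of_ne hw_y hw_z, hg.eq_iff _ hz] at hwz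
    exact hw_z (hxz.2 w hxw hwz)

end

lemma mem_accessible_displace [DecidableEq V] [Fintype C]
    (hg : IsRecoloring G s a (accessible G f a) y f g) (hy : f y ∉ accessible G f a)
    (hz : f z ∈ accessible G f a) {E : Set C}
    (hE : ∀ e ∈ E, e ∈ accessible G f a → e ≠ f z ∧ e ≠ c) (hd : d ≠ f z)
    (h : Reaches (Movable G f) E d a) : d ∈ accessible G (displace g y z c) a := by
  induction h using ReflTransGen.head_induction_on with
  | refl => exact self_mem_accessible
  | @head d e hstep he ih =>
    obtain ⟨⟨x, rfl, hxe⟩, heE⟩ := hstep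
    have heA : e ∈ accessible G f a := mem_accessible.2 (Reaches.mono (Set.subset_univ E) he)
    obtain ⟨hez, hec⟩ := hE e heE heA
    have hxA : f x ∈ accessible G f a := mem_accessible_of_movable ⟨x, rfl, hxe⟩ heA
    have hxz : x ≠ z := fun h => hd (h ▸ rfl)
    exact mem_accessible_of_movable (hg.movable_displace hy hz hxA hxz heA hez hec hxe) (ih hez)

end IsRecoloring

section Extend

variable [Fintype V] [DecidableEq V] [DecidableEq C]

lemma card_filter_eq_add_ite (g : V → C) (y : V) (c : C) :
    #{x | g x = c} = #{x | g x = c ∧ x ≠ y} + if c = g y then 1 else 0 := by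
  rw [← card_filter_add_card_filter_not (s := {x | g x = c}) (· ≠ y), filter_filter, filter_filter]
  congr 1
  split_ifs with h
  · rw [card_eq_one]
    exact ⟨y, by ext x; grind⟩
  · rw [card_eq_zero, filter_eq_empty_iff]
    grind

lemma isRecoloring_extend (hG : IsProper G f) (hf : IsNearlyUniform s f a b) (ha : a ∈ A)
    (hb : b ∉ A) (hy : f y ∉ A) {h : {x // f x ∉ A ∧ x ≠ y} → {c // c ∉ A}}
    (hh : IsProper (G.comap Subtype.val) h) (hs : ∀ c, #{x | h x = c} = s) :
    IsRecoloring G s a A y f (extend Subtype.val (fun x => (h x : C)) f) := by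
  set g := extend Subtype.val (fun x => (h x : C)) f
  have g_in (x : V) (hx : f x ∉ A ∧ x ≠ y) : g x = h ⟨x, hx⟩ :=
    Subtype.val_injective.extend_apply _ _ (⟨x, hx⟩ : {x // f x ∉ A ∧ x ≠ y})
  have g_out (x : V) (hx : ¬ (f x ∉ A ∧ x ≠ y)) : g x = f x :=
    extend_apply' _ _ _ fun ⟨w, hw⟩ => hx (hw ▸ w.2)
  have eq_iff : ∀ c ∈ A, ∀ x, g x = c ↔ f x = c := by
    intro c hc x
    by_cases hx : f x ∉ A ∧ x ≠ y
    · exact iff_of_false (fun h' => (h ⟨x, hx⟩).2 (g_in x hx ▸ h' ▸ hc)) fun h' => hx.1 (h' ▸ hc)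
    · rw [g_out x hx]
  refine ⟨eq_iff, fun x w hxw hgxw => ?_, fun c => ?_⟩
  · obtain ⟨hxw, hxy, hwy⟩ := SimpleGraph.deleteIncidenceSet_adj.1 hxw
    by_cases hx : f x ∈ A
    · exact hG hxw (((eq_iff _ hx w).1 (hgxw ▸ (eq_iff _ hx x).2 rfl)).symm)
    by_cases hw : f w ∈ A
    · exact hG hxw ((eq_iff _ hw x).1 (hgxw ▸ (eq_iff _ hw w).2 rfl))
    · rw [g_in x ⟨hx, hxy⟩, g_in w ⟨hw, hwy⟩] at hgxw
      have hadj : (G.comap Subtype.val).Adj (⟨x, hx, hxy⟩ : {x // f x ∉ A ∧ x ≠ y})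
        ⟨w, hw, hwy⟩ := hxw
      exact hh hadj (Subtype.ext hgxw)
  · have hgy : g y = f y := g_out y fun h => h.2 rfl
    by_cases hc : c ∈ A
    · simpa [eq_iff c hc, hgy, ne_of_mem_of_not_mem hc hy, ne_of_mem_of_not_mem hc hb] using hf c
    · rw [if_neg (ne_of_mem_of_not_mem ha hc).symm, add_zero, card_filter_eq_add_ite g y c,
        ← hs ⟨c, hc⟩, ← card_map (Embedding.subtype _)]
      congr 2
      ext x
      simp only [mem_filter, mem_univ, true_and, mem_map, Embedding.subtype_apply]
      constructor
      · rintro ⟨rfl, hxy⟩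
        have hx : f x ∉ A := fun hx => hc ((eq_iff _ hx x).2 rfl ▸ hx)
        exact ⟨⟨x, hx, hxy⟩, Subtype.ext (g_in x ⟨hx, hxy⟩).symm, rfl⟩
      · rintro ⟨w, hw, rfl⟩
        exact ⟨(g_in w w.2).trans (congrArg Subtype.val hw), w.2.2⟩

end Extend

end Recoloring

section Induction

/-- The Hajnal–Szemerédi theorem for graphs with `m` vertices and colour classes of exactly `s`
vertices. It is proved by strong induction on `m`. -/
def UniformlyColorable (m s : ℕ) : Prop :=
  ∀ ⦃V : Type u⦄ ⦃C : Type v⦄ [Fintype V] [Fintype C] [DecidableEq C] (G : SimpleGraph V)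
    [DecidableRel G.Adj], Fintype.card V = m → m = Fintype.card C * s →
    (∀ x, G.degree x < Fintype.card C) → HasUniformColoring G C s

variable [Fintype V] {A T : Finset C} {u : C} {x y z : V} {g : V → C}

section

variable [DecidableEq V] [DecidableEq C]

lemma degree_comap_val_le [DecidableRel G.Adj] (x : {x // f x ∉ A ∧ x ≠ y}) :
    (G.comap Subtype.val).degree x ≤ outsideDegree G f A x := by
  rw [← SimpleGraph.card_neighborFinset_eq_degree, ← card_map (Embedding.subtype _)]
  refine card_le_card fun w hw => ?_
  obtain ⟨w, hxw, rfl⟩ := mem_map.1 hw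
  rw [SimpleGraph.mem_neighborFinset, SimpleGraph.comap_adj] at hxw
  exact mem_filter.2 ⟨mem_univ _, w.2.1, hxw⟩

lemma IsNearlyUniform.card_subtype [Fintype C] (hf : IsNearlyUniform s f a b)
    (ha : a ∈ A) (hb : b ∉ A) (hy : f y ∉ A) :
    Fintype.card {x // f x ∉ A ∧ x ≠ y} = #Aᶜ * s := by
  have herase : ({x | f x ∉ A ∧ x ≠ y} : Finset V) = ({x | f x ∉ A} : Finset V).erase y := by
    ext x
    simp [and_comm]
  rw [Fintype.card_subtype, herase, card_erase_of_mem (by simpa using hy),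
    hf.card_filter_notMem ha hb, Nat.add_sub_cancel]

end

variable [Fintype C] [DecidableRel G.Adj]

lemma exists_notMem_free_color (hdeg : G.degree z < Fintype.card C) (hz : f z ∈ A)
    (hstuck : ∀ c ∈ A, c ≠ f z → Sees G f z c) (hy : f y ∉ A) (hzy : G.Adj z y)
    (hg : ∀ w, f w ∈ A → g w ∈ A) : ∃ c ∉ A, ∀ w, G.Adj z w → w ≠ y → g w ≠ c := by
  classical
  have hout : outsideDegree G f A z ≤ #Aᶜ := outsideDegree_le_card_compl hdeg hz hstuck
  have hlt : #((({w | f w ∉ A ∧ G.Adj z w} : Finset V).erase y).image g) < #Aᶜ :=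
    card_image_le.trans_lt ((card_erase_lt_of_mem (by simp [hy, hzy])).trans_le hout)
  obtain ⟨c, hc, hcg⟩ := exists_mem_notMem_of_card_lt_card hlt
  have hcA := mem_compl.1 hc
  refine ⟨c, hcA, fun w hzw hwy hwc => hcg ?_⟩
  have hw : f w ∉ A := fun hw => hcA (hwc ▸ hg w hw)
  exact mem_image.2 ⟨w, by simp [hwy, hw, hzw], hwc⟩

variable [DecidableEq C]

lemma exists_isRecoloring (hsmall : ∀ m < Fintype.card V, UniformlyColorable.{u, v} m s)
    (hdeg : ∀ x, G.degree x < Fintype.card C) (hG : IsProper G f) (hf : IsNearlyUniform s f a b)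
    (hb : b ∉ accessible G f a) (hy : f y ∉ accessible G f a) :
    ∃ g, IsRecoloring G s a (accessible G f a) y f g := by
  classical
  set A := accessible G f a
  have hcolors : Fintype.card {c // c ∉ A} = #Aᶜ := by
    rw [Fintype.card_subtype, compl_eq_univ_sdiff, sdiff_eq_filter]
  have hcard : Fintype.card {x // f x ∉ A ∧ x ≠ y} = #Aᶜ * s :=
    hf.card_subtype self_mem_accessible hb hy
  have hlt : Fintype.card {x // f x ∉ A ∧ x ≠ y} < Fintype.card V :=
    Fintype.card_subtype_lt (x := y) (by simp)
  obtain ⟨h, hh, hs⟩ := hsmall _ hlt (C := {c // c ∉ A})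
    (G.comap (Subtype.val : {x // f x ∉ A ∧ x ≠ y} → V)) rfl (by rw [hcard, hcolors])
    fun x => (degree_comap_val_le x).trans_lt <| hcolors ▸ outsideDegree_lt_card_compl (hdeg x)
      fun _ => sees_of_mem_accessible x.2.1
  exact ⟨_, isRecoloring_extend hG hf self_mem_accessible hb hy hh hs⟩

lemma hasUniformColoring_of_not_soloStuck
    (hsmall : ∀ m < Fintype.card V, UniformlyColorable.{u, v} m s)
    (hdeg : ∀ x, G.degree x < Fintype.card C) (hG : IsProper G f) (hf : IsNearlyUniform s f a b)
    (hb : b ∉ accessible G f a) (hT : IsTerminalFamily (Movable G f) a T u)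
    (hstuck : ¬ SoloStuck G f (accessible G f a) T) : HasUniformColoring G C s := by
  classical
  simp only [SoloStuck, not_forall] at hstuck
  obtain ⟨y, z, hy, hz, hyz, c, hc, hcz, hzc⟩ := hstuck
  obtain ⟨g, hg⟩ := exists_isRecoloring hsmall hdeg hG hf hb hy
  have hzA : f z ∈ accessible G f a := hT.subset_accessible hz
  have hproper : IsProper G (displace g y z c) :=
    hg.isProper_displace hzA hyz hcz fun w hzw _ hwc => hzc ⟨w, hzw, (hg.eq_iff c hc w).1 hwc⟩
  have hc_acc : c ∈ accessible G (displace g y z c) a :=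
    hg.mem_accessible_displace hy hzA (E := {f z}ᶜ \ {c}) (fun e he _ => he) hcz
      (hT.reaches_avoiding _ hz c (mem_accessible.1 hc)).sdiff_start
  exact hasUniformColoring_of_reaches hproper (hg.isNearlyUniform_displace hyz.1.ne)
    (mem_accessible.1 hc_acc)

lemma exists_accessible_ssubset_of_soloStuck
    (hsmall : ∀ m < Fintype.card V, UniformlyColorable.{u, v} m s)
    (hdeg : ∀ x, G.degree x < Fintype.card C) (hG : IsProper G f) (hf : IsNearlyUniform s f a b)
    (hb : b ∉ accessible G f a) (hT : IsTerminalFamily (Movable G f) a T u)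
    (hstuck : SoloStuck G f (accessible G f a) T) :
    ∃ f' b', IsProper G f' ∧ IsNearlyUniform s f' a b' ∧
      accessible G f a ⊂ accessible G f' a := by
  classical
  obtain ⟨z, y, y', hzT, hy, hy', hyz, hyz', hne, hnadj⟩ :=
    hT.exists_solo_pair hdeg hf hb hstuck
  have hz : f z ∈ accessible G f a := hT.subset_accessible hzT
  have hsees : ∀ d ∈ accessible G f a, d ≠ f z → Sees G f z d := hstuck hy hzT hyz
  obtain ⟨g, hg⟩ := exists_isRecoloring hsmall hdeg hG hf hb hy
  obtain ⟨c, hc, hfree⟩ := exists_notMem_free_color (hdeg z) hz hsees hy hyz.1.symm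
    fun w hw => (hg.apply_eq hw).symm ▸ hw
  have avoid : ∀ d ∈ accessible G f a, Reaches (Movable G f) {f z}ᶜ d a := fun d hd =>
    hT.reaches_avoiding _ hzT d (mem_accessible.1 hd)
  have hstay : ∀ d ∈ accessible G f a, d ≠ f z → d ∈ accessible G (displace g y z c) a :=
    fun d hd hdz => hg.mem_accessible_displace hy hz
      (fun e hez heA => ⟨hez, ne_of_mem_of_not_mem heA hc⟩) hdz (avoid d hd)
  have hz_stay : f z ∈ accessible G (displace g y z c) a := by
    rcases ReflTransGen.cases_head (avoid _ hz) with hza | ⟨d, ⟨⟨x, hxz, hxd⟩, hdz⟩, hd⟩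
    · exact absurd (hza ▸ hzT) hT.root_notMem
    have hdA : d ∈ accessible G f a := mem_accessible.2 (Reaches.mono (Set.subset_univ _) hd)
    have hx : x ≠ z := fun h => hxd (h ▸ hsees d hdA hdz)
    exact mem_accessible_of_movable (hxz ▸ hg.movable_displace hy hz (hxz ▸ hz) hx hdA hdz
      (ne_of_mem_of_not_mem hdA hc) hxd) (hstay d hdA hdz)
  have hmoves : Movable G (displace g y z c) (g y') (f z) :=
    hg.movable_displace_of_solo hz hyz' hne.symm (fun h => hnadj h.symm)
      (ne_of_mem_of_not_mem hz hc).symm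
  refine ⟨displace g y z c, c, hg.isProper_displace hz hyz (ne_of_mem_of_not_mem hz hc).symm hfree,
    hg.isNearlyUniform_displace hyz.1.ne, (ssubset_iff_of_subset fun d hd => ?_).2
      ⟨g y', mem_accessible_of_movable hmoves hz_stay, hg.apply_notMem hy'⟩⟩
  by_cases hdz : d = f z
  exacts [hdz ▸ hz_stay, hstay d hd hdz]

theorem hasUniformColoring_of_isNearlyUniform
    (hsmall : ∀ m < Fintype.card V, UniformlyColorable.{u, v} m s)
    (hdeg : ∀ x, G.degree x < Fintype.card C) (hG : IsProper G f)
    (hf : IsNearlyUniform s f a b) : HasUniformColoring G C s := by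
  induction hA : accessible G f a using WellFoundedGT.induction generalizing f b with
  | ind A ih =>
  subst hA
  by_cases hb : b ∈ accessible G f a
  · exact hasUniformColoring_of_reaches hG hf (mem_accessible.1 hb)
  obtain ⟨c, hc, hca⟩ := exists_mem_accessible_ne hdeg hf hb
  obtain ⟨T, u, hT⟩ := exists_isTerminalFamily hca (mem_accessible.1 hc)
  by_cases hstuck : SoloStuck G f (accessible G f a) T
  · obtain ⟨f', b', hG', hf', hlt⟩ :=
      exists_accessible_ssubset_of_soloStuck hsmall hdeg hG hf hb hT hstuck
    exact ih _ hlt hG' hf' rfl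
  · exact hasUniformColoring_of_not_soloStuck hsmall hdeg hG hf hb hT hstuck

lemma HasUniformColoring.of_deleteIncidenceSet
    (hsmall : ∀ m < Fintype.card V, UniformlyColorable.{u, v} m s)
    (hdeg : ∀ x, G.degree x < Fintype.card C)
    (h : HasUniformColoring (G.deleteIncidenceSet x) C s) : HasUniformColoring G C s := by
  classical
  obtain ⟨f, hf, hs⟩ := h
  have hlt : #((G.neighborFinset x).image f) < #(univ : Finset C) :=
    card_image_le.trans_lt (hdeg x)
  obtain ⟨d, -, hd⟩ := exists_mem_notMem_of_card_lt_card hlt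
  have hproper : IsProper G (update f x d) :=
    hf.update fun w hw hwd => hd (mem_image.2 ⟨w, by simpa using hw, hwd⟩)
  have hnear : IsNearlyUniform s f (f x) (f x) := fun c => by rw [hs c]
  exact hasUniformColoring_of_isNearlyUniform hsmall hdeg hproper (hnear.update d)

end Induction

lemma hasUniformColoring_bot [Fintype V] [Fintype C] [DecidableEq C]
    (h : Fintype.card V = Fintype.card C * s) : HasUniformColoring (⊥ : SimpleGraph V) C s := by
  obtain ⟨e⟩ : Nonempty (V ≃ C × Fin s) :=
    Fintype.card_eq.1 (by rw [h, Fintype.card_prod, Fintype.card_fin])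
  refine ⟨fun x => (e x).1, fun x y hxy => hxy.elim, fun c => ?_⟩
  calc #{x | (e x).1 = c} = #(univ.map (Embedding.sectR c (Fin s))) :=
        card_equiv e fun x => by simp [Prod.ext_iff, eq_comm]
    _ = s := by simp

theorem uniformlyColorable (m s : ℕ) : UniformlyColorable.{u, v} m s := by
  induction m using Nat.strong_induction_on with
  | h m ih =>
  intro V C _ _ _ G _ hV hm hdeg
  classical
  subst hV
  suffices ∀ H ≤ G, HasUniformColoring H C s from this G le_rfl
  intro H hHG
  induction H using WellFoundedLT.induction with
  | ind H ihH =>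
  obtain rfl | hne := eq_or_ne H ⊥
  · exact hasUniformColoring_bot hm
  obtain ⟨x, w, hxw⟩ := SimpleGraph.ne_bot_iff_exists_adj.1 hne
  have hlt : H.deleteIncidenceSet x < H := (H.deleteIncidenceSet_le x).lt_of_ne fun h =>
    (H.deleteIncidenceSet_adj.1 (h.symm ▸ hxw)).2.1 rfl
  exact .of_deleteIncidenceSet ih (fun y => (SimpleGraph.degree_le_of_le hHG).trans_lt (hdeg y))
    (ihH _ hlt (hlt.le.trans hHG))

section Padding

variable {W : Type*} {H : SimpleGraph W}

lemma degree_sum_inl {v : V} [Fintype (G.neighborSet v)]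
    {_ : Fintype ((G ⊕g H).neighborSet (.inl v))} : (G ⊕g H).degree (.inl v) = G.degree v := by
  rw [← SimpleGraph.card_neighborFinset_eq_degree, ← SimpleGraph.card_neighborFinset_eq_degree,
    ← card_map (Embedding.inl : V ↪ V ⊕ W)]
  congr 1
  ext (x | x) <;> simp

lemma degree_sum_inr {w : W} [Fintype (H.neighborSet w)]
    {_ : Fintype ((G ⊕g H).neighborSet (.inr w))} : (G ⊕g H).degree (.inr w) = H.degree w := by
  rw [← SimpleGraph.card_neighborFinset_eq_degree, ← SimpleGraph.card_neighborFinset_eq_degree,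
    ← card_map (Embedding.inr : W ↪ V ⊕ W)]
  congr 1
  ext (x | x) <;> simp

lemma exists_lt_add_eq_ceilDiv_mul (n : ℕ) {r : ℕ} (hr : 0 < r) :
    ∃ p < r, n + p = n ⌈/⌉ r * r := by
  have hceil : n ⌈/⌉ r = (n + r - 1) / r := Nat.ceilDiv_eq_add_pred_div n r
  have hdm := Nat.div_add_mod' (n + r - 1) r
  have hlt := Nat.mod_lt (n + r - 1) hr
  exact ⟨r - 1 - (n + r - 1) % r, by omega, by rw [hceil]; omega⟩

/- Disjoint union with a complete graph on fewer than `card C` vertices makes the number of vertices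
a multiple of `card C`; deleting it again removes at most one vertex from each class. -/
theorem exists_equitable_coloring [Fintype V] [Fintype C] [DecidableEq C] [Nonempty C]
    [DecidableRel G.Adj] (hdeg : ∀ x, G.degree x < Fintype.card C) :
    ∃ f : G.Coloring C, ∀ c, #{x | f x = c} = Fintype.card V / Fintype.card C ∨
      #{x | f x = c} = Fintype.card V ⌈/⌉ Fintype.card C := by
  classical
  obtain ⟨p, hp, hcard⟩ :=
    exists_lt_add_eq_ceilDiv_mul (Fintype.card V) (Fintype.card_pos (α := C))
  set s := Fintype.card V ⌈/⌉ Fintype.card C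
  obtain ⟨f, hf, hs⟩ := uniformlyColorable (Fintype.card (V ⊕ Fin p)) s (C := C)
    (G ⊕g (⊤ : SimpleGraph (Fin p))) rfl (by simpa [mul_comm] using hcard) <| by
      rintro (x | i)
      · exact degree_sum_inl.trans_lt (hdeg x)
      · rw [degree_sum_inr, SimpleGraph.complete_graph_degree, Fintype.card_fin]
        omega
  refine ⟨.mk (f ∘ Sum.inl) fun hxy => hf (SimpleGraph.sum_adj_inl.2 hxy), fun c => ?_⟩
  change #{x | f (.inl x) = c} = _ ∨ #{x | f (.inl x) = c} = s
  have hsplit : #{x | f (.inl x) = c} + #{i | f (.inr i) = c} = s := by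
    rw [← hs c, card_filter, card_filter, card_filter, Fintype.sum_sum_type]
  have hone : #{i | f (.inr i) = c} ≤ 1 := card_le_one.2 fun i hi j hj => by
    by_contra hij
    exact hf (SimpleGraph.sum_adj_inr.2 hij)
      ((mem_filter.1 hi).2.trans (mem_filter.1 hj).2.symm)
  rcases Nat.le_one_iff_eq_zero_or_eq_one.1 hone with hzero | hone
  · right
    omega
  · left
    have hp_pos : 0 < p := Fin.pos (card_pos.1 (hone ▸ one_pos)).choose
    obtain ⟨q, hq⟩ : ∃ q, s = q + 1 := ⟨_, (hsplit.symm.trans (congrArg _ hone))⟩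
    rw [hq] at hcard hsplit
    rw [Nat.div_eq_of_lt_le (k := q) (by linarith) (by omega)]
    omega

end Padding

end EquitableColoring

section Assignment

open Finset

variable {n k : ℕ} {M : Finset (Fin n × Fin n)}

/- The agents sit in a cycle, and `i` reviews `i + d` for all `d` in a fixed set of `k` nonzero
offsets. -/
lemma exists_isAssignment (hkn : k < n) : ∃ M, IsAssignment n k M := by
  have : NeZero n := ⟨by omega⟩
  obtain ⟨D, hD, hDcard⟩ := exists_subset_card_eq (s := (univ : Finset (Fin n)).erase 0) (n := k)
    (by rw [card_erase_of_mem (mem_univ _), card_fin]; omega)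
  refine ⟨({p | p.2 - p.1 ∈ D} : Finset (Fin n × Fin n)), fun i => ?_, fun j => ?_, fun i hi => ?_⟩
  · rw [← hDcard]
    exact card_bij' (fun p _ => p.2 - p.1) (fun d _ => (i, i + d)) (by grind)
      (by simp) (by grind) (by simp)
  · rw [← hDcard]
    exact card_bij' (fun p _ => p.2 - p.1) (fun d _ => (j - d, j)) (by grind)
      (by simp) (by grind) (by simp)
  · exact ne_of_mem_erase (hD (mem_filter.1 hi).2) (sub_self i)

lemma exists_isAssignment_simVal_eq_optSim (hkn : k < n) (S : Fin n → Fin n → ℝ) :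
    ∃ M, IsAssignment n k M ∧ simVal S M = OptSim n k S := by
  have hfin : {x | ∃ M, IsAssignment n k M ∧ simVal S M = x}.Finite :=
    (Set.finite_range (simVal S)).subset fun x ⟨M, _, hx⟩ => ⟨M, hx⟩
  obtain ⟨M, hM⟩ := exists_isAssignment hkn
  exact Set.Nonempty.csSup_mem (s := {x | ∃ M, IsAssignment n k M ∧ simVal S M = x})
    ⟨_, M, hM, rfl⟩ hfin

/-- The graph joining `i` and `j` whenever one of them reviews the submission of the other. A proper
colouring of it is a partition that separates all assigned pairs. -/
def conflictGraph (M : Finset (Fin n × Fin n)) : SimpleGraph (Fin n) :=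
  .fromRel fun i j => (i, j) ∈ M

instance : DecidableRel (conflictGraph M).Adj :=
  inferInstanceAs (DecidableRel (SimpleGraph.fromRel fun i j => (i, j) ∈ M).Adj)

lemma IsAssignment.conflictGraph_adj (hM : IsAssignment n k M) {p : Fin n × Fin n} (hp : p ∈ M) :
    (conflictGraph M).Adj p.1 p.2 := by
  have hne : p.1 ≠ p.2 := fun h => hM.2.2 p.1 ((Prod.ext rfl h : (p.1, p.1) = p) ▸ hp)
  exact (SimpleGraph.fromRel_adj _ _ _).2 ⟨hne, .inl hp⟩

lemma IsAssignment.degree_conflictGraph_le (hM : IsAssignment n k M) (i : Fin n) :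
    (conflictGraph M).degree i ≤ 2 * k := calc
  _ = #((conflictGraph M).neighborFinset i) := rfl
  _ ≤ #({p ∈ M | p.1 = i}.image Prod.snd ∪ {p ∈ M | p.2 = i}.image Prod.fst) := by
      refine card_le_card fun j hj => ?_
      rw [SimpleGraph.mem_neighborFinset] at hj
      simpa using ((SimpleGraph.fromRel_adj _ _ _).1 hj).2
  _ ≤ #{p ∈ M | p.1 = i} + #{p ∈ M | p.2 = i} :=
      (card_union_le _ _).trans (add_le_add card_image_le card_image_le)
  _ = 2 * k := by rw [hM.1, hM.2.1, two_mul]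

end Assignment

theorem stmt3_general (n k : ℕ) (hkn : k < n) (S : Fin n → Fin n → ℝ) :
    ∃ (P : Fin (2 * k + 1) → Finset (Fin n)) (M : Finset (Fin n × Fin n)),
      (∀ t₁ t₂ : Fin (2 * k + 1), t₁ ≠ t₂ → Disjoint (P t₁) (P t₂)) ∧
      Finset.univ.biUnion P = Finset.univ ∧
      (∀ t, (P t).card = n / (2 * k + 1) ∨ (P t).card = (n + 2 * k) / (2 * k + 1)) ∧
      IsAssignment n k M ∧ simVal S M = OptSim n k S ∧
      ∀ p ∈ M, ∀ t : Fin (2 * k + 1), ¬(p.1 ∈ P t ∧ p.2 ∈ P t) := by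
  obtain ⟨M, hM, hopt⟩ := exists_isAssignment_simVal_eq_optSim hkn S
  obtain ⟨f, hf⟩ := EquitableColoring.exists_equitable_coloring (G := conflictGraph M)
    (C := Fin (2 * k + 1)) fun i => by
      rw [Fintype.card_fin, Nat.lt_succ_iff]
      exact hM.degree_conflictGraph_le i
  refine ⟨fun t => {i | f i = t}, M, fun t₁ t₂ hne => ?_, by ext; simp, fun t => ?_, hM, hopt,
    fun p hp t ⟨h₁, h₂⟩ => ?_⟩
  · exact Finset.disjoint_filter.2 fun i _ h₁ h₂ => hne (h₁ ▸ h₂)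
  · simpa only [Fintype.card_fin, Nat.ceilDiv_eq_add_pred_div, ← add_assoc,
      Nat.add_sub_cancel] using hf t
  · exact f.valid (hM.conflictGraph_adj hp) ((Finset.mem_filter.1 h₁).2.trans
      (Finset.mem_filter.1 h₂).2.symm)

theorem stmt3 (n k : ℕ) (hk : 1 ≤ k) (hn : 0 < n) (hkn : k ≤ n / 2)
    (S : Fin n → Fin n → ℝ) (hS : ∀ i j, 0 ≤ S i j ∧ S i j ≤ 1) :
    ∃ (P : Fin (2 * k + 1) → Finset (Fin n)) (M : Finset (Fin n × Fin n)),
      (∀ t₁ t₂ : Fin (2 * k + 1), t₁ ≠ t₂ → Disjoint (P t₁) (P t₂)) ∧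
      Finset.univ.biUnion P = Finset.univ ∧
      (∀ t, (P t).card = n / (2 * k + 1) ∨ (P t).card = (n + 2 * k) / (2 * k + 1)) ∧
      IsAssignment n k M ∧ simVal S M = OptSim n k S ∧
      ∀ p ∈ M, ∀ t : Fin (2 * k + 1), ¬(p.1 ∈ P t ∧ p.2 ∈ P t) :=
  stmt3_general n k (by omega) S
end

section
/- For every integer k ≥ 1 and every even integer n ≥ 6 with k ≤ n/2, there exists a similarity matrix S ∈ [0,1]^{n×n} such that: (a) there exists an assignment M with loads k for which min_{j ∈ [n]} Σ_{i : (i,j) ∈ M} S_{ij} > 0; and (b) for every partition of [n] into two subsets and every assignment M with loads k respecting this partition, there exists j ∈ [n] with Σ_{i : (i,j) ∈ M} S_{ij} = 0. -/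
/-!
Take a derangement `σ` with a 3-cycle, and let `S` be the 0-1 matrix in which `σ j` is the only
agent similar to submission `j`. An assignment has positive fairness exactly when `σ j` reviews `j`
for all `j`. It then cannot respect a partition into two subsets, since `σ` would have to switch
sides at each of the three steps of the 3-cycle. Without a partition such an assignment exists for
every load `1 ≤ k < n`: removing the pairs `(σ j, j)` from the off-diagonal leaves a regular
bipartite graph, and Hall's theorem peels perfect matchings off it until exactly `k - 1` reviews per
agent are left to be added to `σ`.
-/

open Finset Function

section Matching

variable {α β : Type*} [Fintype α] [Fintype β] [DecidableEq α]

/-- The set of pairs `(e j, j)`: the perfect matching in which `e j` reviews submission `j`. -/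
def matching (e : β ≃ α) : Finset (α × β) := {p | e p.2 = p.1}

@[simp] theorem mk_mem_matching {e : β ≃ α} {i : α} {j : β} :
    (i, j) ∈ matching e ↔ e j = i := by
  simp [matching]

theorem matching_subset_offDiag {σ : Equiv.Perm α} :
    matching σ ⊆ univ.offDiag ↔ σ ∈ derangements α := by
  constructor
  · intro h j hj
    simpa using h (mk_mem_matching.2 hj)
  · rintro h ⟨_, j⟩ hj
    obtain rfl := mk_mem_matching.1 hj
    simpa using h j

end Matching

section Biregular

variable {α β : Type*} [DecidableEq α] [DecidableEq β]

/-- `M` is the edge set of a bipartite graph between `α` and `β` in which every vertex, on either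
side, has degree `k`. It is `IsAssignment` without the ban on diagonal pairs. -/
def IsBiregular (k : ℕ) (M : Finset (α × β)) : Prop :=
  (∀ i, #{p ∈ M | p.1 = i} = k) ∧ ∀ j, #{p ∈ M | p.2 = j} = k

namespace IsBiregular

variable {k l : ℕ} {M N : Finset (α × β)}

theorem card_filter_fst_mem (hM : IsBiregular k M) (A : Finset α) :
    #{p ∈ M | p.1 ∈ A} = #A * k := by
  simp only [← sum_card_fiberwise_eq_card_filter, hM.1, sum_const, smul_eq_mul]

theorem card_filter_snd_mem (hM : IsBiregular k M) (B : Finset β) :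
    #{p ∈ M | p.2 ∈ B} = #B * k := by
  simp only [← sum_card_fiberwise_eq_card_filter, hM.2, sum_const, smul_eq_mul]

theorem card_eq_card [Fintype α] [Fintype β] (hM : IsBiregular k M) (hk : 0 < k) :
    Fintype.card α = Fintype.card β := by
  have hα : #M = #(univ : Finset α) * k := by simpa using hM.card_filter_fst_mem univ
  have hβ : #M = #(univ : Finset β) * k := by simpa using hM.card_filter_snd_mem univ
  exact Nat.eq_of_mul_eq_mul_right hk (hα.symm.trans hβ)

theorem union (hM : IsBiregular k M) (hN : IsBiregular l N) (h : Disjoint M N) :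
    IsBiregular (k + l) (M ∪ N) := by
  constructor <;> intro x <;>
    rw [filter_union, card_union_of_disjoint (disjoint_filter_filter h)]
  · rw [hM.1, hN.1]
  · rw [hM.2, hN.2]

theorem sdiff (hM : IsBiregular k M) (hN : IsBiregular l N) (h : N ⊆ M) :
    IsBiregular (k - l) (M \ N) := by
  have filter_sdiff (q : α × β → Prop) [DecidablePred q] :
      {p ∈ M \ N | q p} = {p ∈ M | q p} \ {p ∈ N | q p} := by grind
  constructor <;> intro x <;>
    rw [filter_sdiff, card_sdiff_of_subset (filter_subset_filter _ h)]
  · rw [hM.1, hN.1]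
  · rw [hM.2, hN.2]

end IsBiregular

theorem isBiregular_matching [Fintype α] [Fintype β] (e : β ≃ α) :
    IsBiregular 1 (matching e) := by
  refine ⟨fun i => card_eq_one.2 ⟨(i, e.symm i), ?_⟩, fun j => card_eq_one.2 ⟨(e j, j), ?_⟩⟩ <;>
    grind [mk_mem_matching]

theorem isBiregular_univ [Fintype α] : IsBiregular (Fintype.card α) (univ : Finset (α × α)) := by
  refine ⟨fun i => ?_, fun j => ?_⟩
  · have hrow : ({p | p.1 = i} : Finset (α × α)) = {i} ×ˢ univ := by
      ext ⟨a, b⟩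
      simp [eq_comm]
    rw [hrow, card_product, card_singleton, one_mul, card_univ]
  · have hcol : ({p | p.2 = j} : Finset (α × α)) = univ ×ˢ {j} := by
      ext ⟨a, b⟩
      simp [eq_comm]
    rw [hcol, card_product, card_singleton, mul_one, card_univ]

theorem isBiregular_offDiag [Fintype α] :
    IsBiregular (Fintype.card α - 1) (univ : Finset α).offDiag := by
  have hoffDiag : (univ : Finset α).offDiag = univ \ matching (Equiv.refl α) := by
    ext ⟨i, j⟩
    simp [eq_comm]
  rw [hoffDiag]
  exact isBiregular_univ.sdiff (isBiregular_matching _) (subset_univ _)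

namespace IsBiregular

variable {k r : ℕ} {M : Finset (α × β)}

theorem exists_matching_subset [Fintype α] [Fintype β] (hM : IsBiregular k M) (hk : 0 < k) :
    ∃ e : β ≃ α, matching e ⊆ M := by
  have hall (B : Finset β) : #B ≤ #{i | ∃ j ∈ B, (i, j) ∈ M} := by
    refine Nat.le_of_mul_le_mul_right ?_ hk
    rw [← hM.card_filter_snd_mem, ← hM.card_filter_fst_mem]
    refine card_le_card fun p hp => ?_
    rw [mem_filter] at hp
    simpa [hp.1] using ⟨p.2, hp.2, hp.1⟩
  obtain ⟨f, hf, hfM⟩ :=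
    (Fintype.all_card_le_filter_rel_iff_exists_injective fun j i => (i, j) ∈ M).1 hall
  have hbij : Bijective f :=
    (Fintype.bijective_iff_injective_and_card f).2 ⟨hf, (hM.card_eq_card hk).symm⟩
  refine ⟨Equiv.ofBijective f hbij, ?_⟩
  rintro ⟨i, j⟩ h
  obtain rfl : f j = i := mk_mem_matching.1 h
  exact hfM j

theorem exists_subset_of_le [Finite α] [Finite β] (hM : IsBiregular r M) (hkr : k ≤ r) :
    ∃ N ⊆ M, IsBiregular k N := by
  cases nonempty_fintype α
  cases nonempty_fintype β
  induction r, hkr using Nat.le_induction generalizing M with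
  | base => exact ⟨M, Subset.rfl, hM⟩
  | succ r _ ih =>
    obtain ⟨e, he⟩ := hM.exists_matching_subset r.succ_pos
    obtain ⟨N, hN, hNk⟩ := ih (hM.sdiff (isBiregular_matching e) he)
    exact ⟨N, hN.trans sdiff_subset, hNk⟩

theorem exists_subset_of_matching_subset [Fintype α] [Fintype β] (hM : IsBiregular r M)
    {e : β ≃ α} (he : matching e ⊆ M) (hk : 1 ≤ k) (hkr : k ≤ r) :
    ∃ N ⊆ M, IsBiregular k N ∧ matching e ⊆ N := by
  obtain ⟨N, hN, hNk⟩ := (hM.sdiff (isBiregular_matching e) he).exists_subset_of_le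
    (Nat.sub_le_sub_right hkr 1)
  have hunion := (isBiregular_matching e).union hNk (disjoint_sdiff.mono_right hN)
  rw [Nat.add_sub_cancel' hk] at hunion
  exact ⟨matching e ∪ N, union_subset he (hN.trans sdiff_subset), hunion, subset_union_left⟩

end IsBiregular

end Biregular

section OddCycle

variable {α : Type*} {f : α → α} {s : Set α}

theorem iterate_mem_iff_of_alternating (h : ∀ x, f x ∈ s ↔ x ∉ s) (m : ℕ) (x : α) :
    f^[m] x ∈ s ↔ (Even m ↔ x ∈ s) := by
  induction m with
  | zero => simp
  | succ m ih => rw [iterate_succ_apply', h, ih, Nat.even_add_one]; tauto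

theorem even_of_isPeriodicPt_of_alternating {m : ℕ} {x : α} (h : ∀ x, f x ∈ s ↔ x ∉ s)
    (hx : IsPeriodicPt f m x) : Even m := by
  have hiter := iterate_mem_iff_of_alternating h m x
  rw [hx.eq] at hiter
  tauto

theorem exists_derangement_isPeriodicPt_three [Fintype α] (hα : 5 ≤ Fintype.card α) :
    ∃ σ ∈ derangements α, ∃ x, IsPeriodicPt σ 3 x := by
  obtain ⟨m, hm⟩ := Nat.exists_eq_add_of_le hα
  let e : Fin 3 ⊕ Fin (m + 2) ≃ α := Fintype.equivOfCardEq <| by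
    rw [Fintype.card_sum, Fintype.card_fin, Fintype.card_fin]
    lia
  let τ : Equiv.Perm (Fin 3 ⊕ Fin (m + 2)) := (finRotate 3).sumCongr (finRotate (m + 2))
  have hτ (x) : τ x ≠ x := by
    rcases x with x | x <;> simp [τ]
  refine ⟨e.permCongr τ, fun x hx => hτ (e.symm x) ?_, e (.inl 0), ?_⟩
  · simpa [e.eq_symm_apply] using hx
  · simp [IsPeriodicPt, IsFixedPt, τ]

end OddCycle

section Similarity

variable {α : Type*} [DecidableEq α]

/-- The 0-1 similarity matrix in which `σ j` is the only agent similar to submission `j`. -/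
noncomputable def soleSimilarity (σ : α → α) (i j : α) : ℝ := if σ j = i then 1 else 0

theorem soleSimilarity_nonneg (σ : α → α) (i j : α) : 0 ≤ soleSimilarity σ i j := by
  unfold soleSimilarity
  split_ifs <;> norm_num

theorem soleSimilarity_le_one (σ : α → α) (i j : α) : soleSimilarity σ i j ≤ 1 := by
  unfold soleSimilarity
  split_ifs <;> norm_num

theorem sum_filter_soleSimilarity (σ : α → α) (M : Finset (α × α)) (j : α) :
    ∑ p ∈ M with p.2 = j, soleSimilarity σ p.1 p.2 = if (σ j, j) ∈ M then 1 else 0 := by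
  rw [sum_filter, ← sum_ite_eq' M (σ j, j) fun _ => (1 : ℝ)]
  refine sum_congr rfl fun p _ => ?_
  grind [soleSimilarity]

end Similarity

theorem Respects.mem_left_iff {n : ℕ} {A₁ A₂ : Finset (Fin n)} {M : Finset (Fin n × Fin n)}
    (hM : Respects A₁ A₂ M) (hA : Disjoint A₁ A₂) {i j : Fin n} (hij : (i, j) ∈ M) :
    i ∈ A₁ ↔ j ∉ A₁ := by
  have hdisj (x) (hx : x ∈ A₁) : x ∉ A₂ := disjoint_left.1 hA hx
  rcases hM _ hij with ⟨hi, hj⟩ | ⟨hi, hj⟩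
  · exact iff_of_true hi fun hj' => hdisj j hj' hj
  · exact iff_of_false (fun hi' => hdisj i hi' hi) (not_not_intro hj)

theorem Respects.exists_pair_notMem {n m : ℕ} {A₁ A₂ : Finset (Fin n)}
    {M : Finset (Fin n × Fin n)} {f : Fin n → Fin n} {x : Fin n}
    (hM : Respects A₁ A₂ M) (hA : Disjoint A₁ A₂) (hm : Odd m) (hx : IsPeriodicPt f m x) :
    ∃ j, (f j, j) ∉ M := by
  by_contra! hf
  have halt (j) : f j ∈ (A₁ : Set (Fin n)) ↔ j ∉ (A₁ : Set (Fin n)) :=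
    hM.mem_left_iff hA (hf j)
  exact Nat.not_even_iff_odd.2 hm (even_of_isPeriodicPt_of_alternating halt hx)

theorem exists_isAssignment_matching_subset {n k : ℕ} {σ : Equiv.Perm (Fin n)}
    (hσ : σ ∈ derangements (Fin n)) (hk : 1 ≤ k) (hkn : k < n) :
    ∃ M, IsAssignment n k M ∧ matching σ ⊆ M := by
  obtain ⟨M, hdiag, hM, hσM⟩ := isBiregular_offDiag.exists_subset_of_matching_subset
    (matching_subset_offDiag.2 hσ) hk (by simpa using Nat.le_sub_one_of_lt hkn)
  exact ⟨M, ⟨hM.1, hM.2, fun i hi => by simpa using hdiag hi⟩, hσM⟩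

theorem stmt4_general (n : ℕ) (hn : 5 ≤ n) :
    ∃ S : Fin n → Fin n → ℝ,
      (∀ i j, 0 ≤ S i j ∧ S i j ≤ 1) ∧
      (∀ k, 1 ≤ k → k < n → ∃ M : Finset (Fin n × Fin n), IsAssignment n k M ∧
        ∀ j : Fin n, 0 < ∑ p ∈ M.filter (fun p => p.2 = j), S p.1 p.2) ∧
      (∀ (A₁ A₂ : Finset (Fin n)) (M : Finset (Fin n × Fin n)),
        Disjoint A₁ A₂ → Respects A₁ A₂ M →
        ∃ j : Fin n, ∑ p ∈ M.filter (fun p => p.2 = j), S p.1 p.2 = 0) := by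
  obtain ⟨σ, hσ, x, hx⟩ := exists_derangement_isPeriodicPt_three (α := Fin n) (by simpa using hn)
  refine ⟨soleSimilarity σ, fun i j => ⟨soleSimilarity_nonneg σ i j, soleSimilarity_le_one σ i j⟩,
    fun k hk hkn => ?_, fun A₁ A₂ M hA hM => ?_⟩
  · obtain ⟨M, hM, hσM⟩ := exists_isAssignment_matching_subset hσ hk hkn
    refine ⟨M, hM, fun j => ?_⟩
    rw [sum_filter_soleSimilarity, if_pos (hσM (mk_mem_matching.2 rfl))]
    exact one_pos
  · obtain ⟨j, hj⟩ := hM.exists_pair_notMem hA (by decide) hx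
    exact ⟨j, by rw [sum_filter_soleSimilarity, if_neg hj]⟩

theorem stmt4 (k n : ℕ) (hk : 1 ≤ k) (hn : 6 ≤ n) (heven : Even n) (hkn : k ≤ n / 2) :
    ∃ S : Fin n → Fin n → ℝ,
      (∀ i j, 0 ≤ S i j ∧ S i j ≤ 1) ∧
      (∃ M : Finset (Fin n × Fin n), IsAssignment n k M ∧
        ∀ j : Fin n, 0 < ∑ p ∈ M.filter (fun p => p.2 = j), S p.1 p.2) ∧
      (∀ (A₁ A₂ : Finset (Fin n)) (M : Finset (Fin n × Fin n)),
        Disjoint A₁ A₂ → A₁ ∪ A₂ = Finset.univ →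
        IsAssignment n k M → Respects A₁ A₂ M →
        ∃ j : Fin n, ∑ p ∈ M.filter (fun p => p.2 = j), S p.1 p.2 = 0) := by
  obtain ⟨S, hS, hfair, hpart⟩ := stmt4_general n (by lia)
  exact ⟨S, hS, hfair k hk (by lia), fun A₁ A₂ M hA _ _ hM => hpart A₁ A₂ M hA hM⟩
end

section
/- Let n ≥ 2 be even and let k be a positive integer with k ≤ n/2. For every similarity matrix S ∈ [0,1]^{n×n}, the average over all subsets A₁ ⊆ [n] of size n/2 (with A₂ = [n] \ A₁) of the maximum similarity of an assignment with loads k respecting (A₁, A₂) is at least (1/2)·Opt_S. That is, (1/C(n, n/2))·Σ_{A₁ ⊆ [n], |A₁| = n/2} max{ Σ_{(i,j)∈M} S_{ij} : M an assignment with loads k respecting (A₁, [n]\A₁) } ≥ (1/2)·Opt_S. -/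
/-! Fix an assignment `M` and a half `A`. At each pair of `M` crossing between `A` and `Aᶜ`, with
crossing degrees `r` and `c`, an assignment respecting the cut can be asked to recover the fraction
`1 - k / (2 m) * (r + c - k)₊ ^ 2 / (r c)` of the weight, where `m = n / 2`. By the Gale–Hoffman
theorem its existence reduces to an inequality for every combinatorial rectangle. Over the edges in
a rectangle the sums of `1 / r` and `1 / c` are at most the side lengths, while
`(r + c - k)₊ ^ 2 / (r c)`, as a function of `1 / r` and `1 / c`, lies above the relevant tangent
planes. Hence some fractional assignment respecting the cut dominates the recovered weights, and a
vertex of the transportation polytope that is at least as good is an honest assignment.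

It remains to see that each pair `(i, j)` of `M` retains on average half of its weight. Let `C` be
the partners of `i` and `R` those of `j`. Permuting `R \ C` and `C \ R` replaces the indicator of
`i ∈ A`, `j ∉ A` by its average over `(R \ C) × (C \ R)`, and then the expected loss is bounded by
the second moment of `#(R ∩ A) - #(C ∩ A)` over a random half `A`, which is explicit. -/

open Finset Filter Topology MeasureTheory

/-- The relative loss, up to a scalar, of an edge whose end points have degrees `r` and `c` among
the crossing edges, when all degrees are to be raised to `k`. It is zero if `r` or `c` is. -/
noncomputable def excess (k r c : ℝ) : ℝ := max (r + c - k) 0 ^ 2 / (r * c)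

lemma excess_nonneg {k r c : ℝ} (hr : 0 ≤ r) (hc : 0 ≤ c) : 0 ≤ excess k r c := by
  unfold excess
  positivity

lemma excess_le_one {k r c : ℝ} (hr : 0 ≤ r) (hc : 0 ≤ c) (hrk : r ≤ k) (hck : c ≤ k) :
    excess k r c ≤ 1 := by
  have h : max (r + c - k) 0 ^ 2 ≤ r * c := by
    rw [sq]
    exact mul_le_mul (max_le (by linarith) hr) (max_le (by linarith) hc) (le_max_right _ _) hr
  exact div_le_one_of_le₀ h (mul_nonneg hr hc)

lemma mul_mul_excess_le {a y κ t t' : ℝ} (ha : 0 ≤ a) (hy : 0 ≤ y) (haκ : a ≤ κ) (hyκ : y ≤ κ)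
    (ht : 0 ≤ t) (ht' : 0 ≤ t') :
    a * y * ((κ + t + t') * excess (κ + t + t') (y + t') (a + t)) ≤
      κ * max (a + y - κ) 0 ^ 2 := by
  have hκ : 0 ≤ κ := ha.trans haκ
  rcases ha.eq_or_lt with rfl | ha
  · rw [zero_mul, zero_mul]; positivity
  rcases hy.eq_or_lt with rfl | hy
  · rw [mul_zero, zero_mul]; positivity
  have key : a * y * (κ + t + t') ≤ κ * ((y + t') * (a + t)) := by
    have h₁ := mul_nonneg (mul_nonneg hy.le ht) (sub_nonneg.2 haκ)
    have h₂ := mul_nonneg (mul_nonneg ha.le ht') (sub_nonneg.2 hyκ)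
    have h₃ := mul_nonneg hκ (mul_nonneg ht ht')
    linarith
  have hshift : y + t' + (a + t) - (κ + t + t') = a + y - κ := by ring
  calc _ = a * y * (κ + t + t') * max (a + y - κ) 0 ^ 2 / ((y + t') * (a + t)) := by
        rw [excess, hshift]; ring
    _ ≤ κ * ((y + t') * (a + t)) * max (a + y - κ) 0 ^ 2 / ((y + t') * (a + t)) := by gcongr
    _ = _ := by field_simp

lemma excess_tangent_numerator_le {k r c r₀ c₀ : ℝ} (hr : 0 < r) (hc : 0 < c)
    (hr₀ : 0 ≤ r₀) (hc₀ : 0 ≤ c₀) (h : |r₀ - c₀| ≤ k) (hk : k ≤ r₀ + c₀) :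
    (r₀ + c₀ - k) * ((r₀ + c₀ + k) * (r * c) - r₀ * (k + r₀ - c₀) * c - c₀ * (k + c₀ - r₀) * r) ≤
      r₀ * c₀ * max (r + c - k) 0 ^ 2 := by
  obtain ⟨h₁, h₂⟩ := abs_le.1 h
  have hp : 0 ≤ k + r₀ - c₀ := by linarith
  have hm : 0 ≤ k + c₀ - r₀ := by linarith
  rcases le_total k (r + c) with hrc | hrc
  · rw [max_eq_left (sub_nonneg.2 hrc)]
    have e₁ : 0 ≤ (r₀ + c₀ - k) * ((r₀ + c₀ + k) * (r - c - (r₀ - c₀)) ^ 2) :=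
      mul_nonneg (by linarith) (mul_nonneg (by linarith) (sq_nonneg _))
    have e₂ : 0 ≤ (k + r₀ - c₀) * (k + c₀ - r₀) * (r + c - (r₀ + c₀)) ^ 2 := by positivity
    linear_combination (e₁ + e₂) / 4
  · rw [max_eq_right (sub_nonpos.2 hrc)]
    have hk₀ : 0 < k := by linarith
    have key : 0 ≤ k * (r₀ * (k + r₀ - c₀) * c + c₀ * (k + c₀ - r₀) * r -
        (r₀ + c₀ + k) * (r * c)) := by
      have e₁ : 0 ≤ (k - (r + c)) * (r₀ * (k + r₀ - c₀) * c + c₀ * (k + c₀ - r₀) * r) :=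
        mul_nonneg (by linarith) (by positivity)
      have e₂ : 0 ≤ (r₀ + c₀ - k) * ((k + r₀ - c₀) * c ^ 2 + (k + c₀ - r₀) * r ^ 2) :=
        mul_nonneg (by linarith) (by positivity)
      have e₃ := sq_nonneg ((k + r₀ - c₀) * c - (k + c₀ - r₀) * r)
      linear_combination e₁ + e₂ / 2 + e₃ / 2
    have := mul_nonneg (sub_nonneg.2 hk) (nonneg_of_mul_nonneg_right key hk₀)
    linarith

lemma excess_tangent_le {k r c r₀ c₀ : ℝ} (hr : 0 < r) (hc : 0 < c) (hr₀ : 0 < r₀)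
    (hc₀ : 0 < c₀) (h : |r₀ - c₀| ≤ k) (hk : k ≤ r₀ + c₀) :
    excess k r₀ c₀ - (r₀ + c₀ - k) * (k + r₀ - c₀) / c₀ * (1 / r - 1 / r₀) -
      (r₀ + c₀ - k) * (k + c₀ - r₀) / r₀ * (1 / c - 1 / c₀) ≤ excess k r c := by
  have key := excess_tangent_numerator_le hr hc hr₀.le hc₀.le h hk
  rw [excess, excess, max_eq_left (sub_nonneg.2 hk), le_div_iff₀ (mul_pos hr hc),
    ← mul_le_mul_iff_right₀ (mul_pos hr₀ hc₀)]
  refine le_of_eq_of_le ?_ key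
  field_simp
  ring

lemma card_mul_excess_le_sum {ι : Type*} {E : Finset ι} {r c : ι → ℝ} {k p y : ℝ}
    (hr : ∀ e ∈ E, 0 < r e) (hc : ∀ e ∈ E, 0 < c e)
    (hrp : ∑ e ∈ E, 1 / r e ≤ p) (hcy : ∑ e ∈ E, 1 / c e ≤ y)
    (hpk : #E ≤ k * p) (hyk : #E ≤ k * y) :
    #E * excess k (#E / p) (#E / y) ≤ ∑ e ∈ E, excess k (r e) (c e) := by
  have hsum : 0 ≤ ∑ e ∈ E, excess k (r e) (c e) :=
    sum_nonneg fun e he => excess_nonneg (hr e he).le (hc e he).le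
  rcases E.eq_empty_or_nonempty with rfl | hE
  · simp
  have : (0 : ℝ) < #E := by exact_mod_cast hE.card_pos
  have hp : 0 < p := (sum_pos (fun e he => one_div_pos.2 (hr e he)) hE).trans_le hrp
  have hy : 0 < y := (sum_pos (fun e he => one_div_pos.2 (hc e he)) hE).trans_le hcy
  set r₀ := #E / p with hr₀
  set c₀ := #E / y with hc₀
  rcases le_total (r₀ + c₀) k with hk | hk
  · simpa [excess, max_eq_right (sub_nonpos.2 hk)] using hsum
  have hr₀_pos : 0 < r₀ := by positivity
  have hc₀_pos : 0 < c₀ := by positivity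
  have hr₀k : r₀ ≤ k := (div_le_iff₀ hp).2 hpk
  have hc₀k : c₀ ≤ k := (div_le_iff₀ hy).2 hyk
  have htangent := sum_le_sum fun e he =>
    excess_tangent_le (hr e he) (hc e he) hr₀_pos hc₀_pos (abs_le.2 ⟨by linarith, by linarith⟩) hk
  simp only [sum_sub_distrib, ← mul_sum, sum_const, nsmul_eq_mul] at htangent
  have hp₀ : (#E : ℝ) * (1 / r₀) = p := by rw [hr₀]; field_simp
  have hy₀ : (#E : ℝ) * (1 / c₀) = y := by rw [hc₀]; field_simp
  rw [hp₀, hy₀] at htangent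
  have e₁ : 0 ≤ (r₀ + c₀ - k) * (k + r₀ - c₀) / c₀ * (p - ∑ e ∈ E, 1 / r e) :=
    mul_nonneg (div_nonneg (mul_nonneg (by linarith) (by linarith)) hc₀_pos.le) (by linarith)
  have e₂ : 0 ≤ (r₀ + c₀ - k) * (k + c₀ - r₀) / r₀ * (y - ∑ e ∈ E, 1 / c e) :=
    mul_nonneg (div_nonneg (mul_nonneg (by linarith) (by linarith)) hr₀_pos.le) (by linarith)
  linarith

lemma two_mul_mul_add_sub_le_mul_sq {m k h w : ℝ} (hk : 0 ≤ k) (hkh : k ≤ h) (hhm : h ≤ m)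
    (hw : 0 ≤ w) (hwh : w ≤ h) : 2 * m * (h * (m - h)) * (w + k - m) ≤ (k * w) ^ 2 := by
  have hm : 0 ≤ m := by linarith
  have hh : 0 ≤ h * (m - h) := mul_nonneg (hk.trans hkh) (sub_nonneg.2 hhm)
  rcases le_total (w + k) m with hwk | hwk
  · have := mul_nonneg (mul_nonneg hm hh) (sub_nonneg.2 hwk)
    linarith [sq_nonneg (k * w)]
  have : 0 ≤ w + k - m := sub_nonneg.2 hwk
  rcases le_total m (2 * k) with hmk | hmk
  · have e₁ : h * (m - h) ≤ k * (m - k) := by nlinarith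
    have e₂ : 4 * (m - k) * (w + k - m) ≤ w ^ 2 := by
      linarith [sq_nonneg (w - 2 * (m - k))]
    calc 2 * m * (h * (m - h)) * (w + k - m)
        ≤ 2 * m * (k * (m - k)) * (w + k - m) := by gcongr
      _ = m / 2 * k * (4 * (m - k) * (w + k - m)) := by ring
      _ ≤ m / 2 * k * w ^ 2 := by gcongr
      _ ≤ k * k * w ^ 2 := by gcongr; linarith
      _ = (k * w) ^ 2 := by ring
  · have e₁ : h * (m - h) ≤ w * (m - w) := by nlinarith
    have e₂ : 4 * (m - w) * (w + k - m) ≤ k ^ 2 := by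
      linarith [sq_nonneg (2 * (m - w) - k)]
    calc 2 * m * (h * (m - h)) * (w + k - m)
        ≤ 2 * m * (w * (m - w)) * (w + k - m) := by gcongr
      _ = m / 2 * w * (4 * (m - w) * (w + k - m)) := by ring
      _ ≤ m / 2 * w * k ^ 2 := by gcongr
      _ ≤ w * w * k ^ 2 := by gcongr; linarith
      _ = (k * w) ^ 2 := by ring

-- `t` is the edge density of a `p × y` rectangle, whose average degrees are then `t * y`, `t * p`.
lemma two_mul_mul_deficit_le_mul_max_sq {m k p y t : ℝ} (ht : 0 ≤ t) (ht₁ : t ≤ 1)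
    (hk : 0 ≤ k) (hkm : k ≤ m) (hp : 0 ≤ p) (hy : 0 ≤ y) (hpm : p ≤ m) (hym : y ≤ m)
    (hpk : t * p ≤ k) (hyk : t * y ≤ k) :
    2 * m * t * ((m - k) * (p + y - m) - (1 - t) * (p * y)) ≤
      k * max (t * (p + y) - k) 0 ^ 2 := by
  rcases le_or_gt ((m - k) * (p + y - m)) ((1 - t) * (p * y)) with hle | hlt
  · have := mul_nonneg (mul_nonneg (hp.trans hpm) ht) (sub_nonneg.2 hle)
    linarith [mul_nonneg hk (sq_nonneg (max (t * (p + y) - k) 0))]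
  have hs : 0 < p + y - m := pos_of_mul_pos_right
    ((mul_nonneg (sub_nonneg.2 ht₁) (mul_nonneg hp hy)).trans_lt hlt) (sub_nonneg.2 hkm)
  have htm : k < t * m := by
    by_contra! htm
    have e₁ := mul_nonneg (sub_nonneg.2 ht₁) (mul_nonneg (sub_nonneg.2 hpm) (sub_nonneg.2 hym))
    have e₂ := mul_nonneg (sub_nonneg.2 htm) hs.le
    linarith
  have ht_pos : 0 < t := pos_of_mul_pos_left (hk.trans_lt htm) (hp.trans hpm)
  obtain ⟨h, rfl⟩ : ∃ h, k = t * h := ⟨k / t, by field_simp⟩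
  have hph : p ≤ h := le_of_mul_le_mul_left hpk ht_pos
  have hyh : y ≤ h := le_of_mul_le_mul_left hyk ht_pos
  have hhm : h < m := lt_of_mul_lt_mul_left htm ht
  have hh : 0 < h := by linarith
  have hw : 0 ≤ p + y - h := by linarith
  have hcore := two_mul_mul_add_sub_le_mul_sq hk (mul_le_of_le_one_left hh.le ht₁) hhm.le hw
    (by linarith)
  have hcore' : 2 * m * (m - h) * (p + y - h + t * h - m) ≤ h * t ^ 2 * (p + y - h) ^ 2 :=
    le_of_mul_le_mul_left (by linarith) hh
  have hmax : max (t * (p + y) - t * h) 0 = t * (p + y - h) := by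
    rw [← mul_sub]; exact max_eq_left (by positivity)
  calc 2 * m * t * ((m - t * h) * (p + y - m) - (1 - t) * (p * y))
      ≤ 2 * m * t * ((m - t * h) * (p + y - m) - (1 - t) * (h * (p + y - h))) := by
        have : 0 ≤ m := by linarith
        have : 0 ≤ 1 - t := by linarith
        have : h * (p + y - h) ≤ p * y := by
          linarith [mul_nonneg (sub_nonneg.2 hph) (sub_nonneg.2 hyh)]
        gcongr
    _ = t * (2 * m * (m - h) * (p + y - h + t * h - m)) := by ring
    _ ≤ t * (h * t ^ 2 * (p + y - h) ^ 2) := by gcongr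
    _ = t * h * max (t * (p + y) - t * h) 0 ^ 2 := by rw [hmax]; ring

lemma sub_mul_excess_le {m k p y N : ℝ} (hk : 0 ≤ k) (hkm : k ≤ m) (hy : 0 ≤ y)
    (hpm : p ≤ m) (hym : y ≤ m) (hN : 0 ≤ N) (hNpy : N ≤ p * y) (hNp : N ≤ k * p)
    (hNy : N ≤ k * y) :
    N - k / (2 * m) * (N * excess k (N / p) (N / y)) ≤ p * y - (m - k) * (p + y - m) := by
  rcases hN.eq_or_lt with rfl | hN
  · have e₁ := mul_nonneg (sub_nonneg.2 hpm) (sub_nonneg.2 hym)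
    rcases le_total (p + y) m with h | h
    · linarith [mul_nonneg (sub_nonneg.2 hkm) (sub_nonneg.2 h)]
    · linarith [mul_nonneg hk (sub_nonneg.2 h)]
  have hp : 0 < p := pos_of_mul_pos_left (hN.trans_le hNpy) hy
  have hy : 0 < y := pos_of_mul_pos_right (hN.trans_le hNpy) hp.le
  have hm : 0 < m := hp.trans_le hpm
  obtain ⟨t, rfl⟩ : ∃ t, N = t * (p * y) := ⟨N / (p * y), by field_simp⟩
  have ht : 0 < t := pos_of_mul_pos_left hN (by positivity)
  have hdens := two_mul_mul_deficit_le_mul_max_sq ht.le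
    (le_of_mul_le_mul_right (by linarith) (mul_pos hp hy)) hk hkm hp.le hy.le hpm hym
    (le_of_mul_le_mul_right (by linarith) hy) (le_of_mul_le_mul_right (by linarith) hp)
  have hexcess : t * (p * y) * excess k (t * (p * y) / p) (t * (p * y) / y) =
      max (t * (p + y) - k) 0 ^ 2 / t := by
    have h₁ : t * (p * y) / p = t * y := by field_simp
    have h₂ : t * (p * y) / y = t * p := by field_simp
    rw [h₁, h₂, excess, add_comm (t * y), ← mul_add]
    field_simp
  rw [hexcess]
  have hscale : (m - k) * (p + y - m) - (1 - t) * (p * y) ≤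
      k / (2 * m) * (max (t * (p + y) - k) 0 ^ 2 / t) := by
    rw [div_mul_div_comm, le_div_iff₀ (by positivity)]
    linarith
  linarith

section Retention

variable {I J : Type*}

/-- The degree of the left vertex `i` in the bipartite graph with edge set `E`. -/
def leftDegree [DecidableEq I] (E : Finset (I × J)) (i : I) : ℕ := #{e ∈ E | e.1 = i}

/-- The degree of the right vertex `j` in the bipartite graph with edge set `E`. -/
def rightDegree [DecidableEq J] (E : Finset (I × J)) (j : J) : ℕ := #{e ∈ E | e.2 = j}

lemma leftDegree_pos [DecidableEq I] {E : Finset (I × J)} {e : I × J} (he : e ∈ E) :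
    0 < leftDegree E e.1 :=
  card_pos.2 ⟨e, mem_filter.2 ⟨he, rfl⟩⟩

lemma rightDegree_pos [DecidableEq J] {E : Finset (I × J)} {e : I × J} (he : e ∈ E) :
    0 < rightDegree E e.2 :=
  card_pos.2 ⟨e, mem_filter.2 ⟨he, rfl⟩⟩

lemma leftDegree_eq_card [DecidableEq I] [Fintype J] [DecidableEq J] (E : Finset (I × J)) (i : I) :
    leftDegree E i = #{j | (i, j) ∈ E} :=
  card_nbij' Prod.snd (Prod.mk i)
    (by rintro ⟨_, j⟩ h; obtain ⟨he, rfl⟩ := mem_filter.1 h; simpa using he)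
    (fun j hj => by simpa using hj) (by rintro ⟨_, j⟩ _; simp_all) fun _ _ => rfl

lemma rightDegree_eq_card [DecidableEq J] [Fintype I] [DecidableEq I] (E : Finset (I × J)) (j : J) :
    rightDegree E j = #{i | (i, j) ∈ E} :=
  card_nbij' Prod.fst (fun i => (i, j))
    (by rintro ⟨i, _⟩ h; obtain ⟨he, rfl⟩ := mem_filter.1 h; simpa using he)
    (fun i hi => by simpa using hi) (by rintro ⟨i, _⟩ _; simp_all) fun _ _ => rfl

variable [DecidableEq I] [DecidableEq J]

/-- The fraction of the weight of the edge `e` that an assignment respecting a cut is asked to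
recover, where `E` is the set of edges crossing the cut and `m` is the size of either side. -/
noncomputable def retention (m k : ℝ) (E : Finset (I × J)) (e : I × J) : ℝ :=
  1 - k / (2 * m) * excess k (leftDegree E e.1) (rightDegree E e.2)

lemma retention_le_one {m k : ℝ} (hm : 0 ≤ m) (hk : 0 ≤ k) (E : Finset (I × J)) (e : I × J) :
    retention m k E e ≤ 1 := by
  have := excess_nonneg (k := k) (leftDegree E e.1).cast_nonneg (rightDegree E e.2).cast_nonneg
  rw [retention, sub_le_self_iff]
  positivity

lemma retention_nonneg {m k : ℝ} (hk : 0 ≤ k) (hkm : k ≤ m) {E : Finset (I × J)}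
    (hl : ∀ i, (leftDegree E i : ℝ) ≤ k) (hr : ∀ j, (rightDegree E j : ℝ) ≤ k) (e : I × J) :
    0 ≤ retention m k E e := by
  have h₁ : k / (2 * m) ≤ 1 := div_le_one_of_le₀ (by linarith) (by linarith)
  have h₂ := excess_le_one (leftDegree E e.1).cast_nonneg (rightDegree E e.2).cast_nonneg
    (hl e.1) (hr e.2)
  exact sub_nonneg.2 (mul_le_one₀ h₁ (excess_nonneg (Nat.cast_nonneg _) (Nat.cast_nonneg _)) h₂)

lemma sum_one_div_card_fiber_le {α β : Type*} [DecidableEq β] {E F : Finset α} {P : Finset β}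
    {f : α → β} (hFE : F ⊆ E) (hf : ∀ a ∈ F, f a ∈ P) :
    ∑ a ∈ F, 1 / (#{a' ∈ E | f a' = f a} : ℝ) ≤ #P := by
  rw [← sum_fiberwise_of_maps_to hf, ← nsmul_one #P]
  refine sum_le_card_nsmul P _ 1 fun b _ => ?_
  calc ∑ a ∈ F with f a = b, 1 / (#{a' ∈ E | f a' = f a} : ℝ)
      = ∑ a ∈ F with f a = b, 1 / (#{a' ∈ E | f a' = b} : ℝ) :=
        sum_congr rfl fun a ha => by rw [(mem_filter.1 ha).2]
    _ = #{a ∈ F | f a = b} / (#{a' ∈ E | f a' = b} : ℝ) := by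
        rw [sum_const, nsmul_eq_mul, mul_one_div]
    _ ≤ 1 := div_le_one_of_le₀ (by gcongr) (Nat.cast_nonneg _)

lemma card_le_mul_card_of_fiber_le {α β : Type*} [DecidableEq β] {E F : Finset α} {P : Finset β}
    {f : α → β} {k : ℝ} (hFE : F ⊆ E) (hf : ∀ a ∈ F, f a ∈ P)
    (hk : ∀ b, (#{a ∈ E | f a = b} : ℝ) ≤ k) : (#F : ℝ) ≤ k * #P := by
  rw [card_eq_sum_card_fiberwise hf, Nat.cast_sum, mul_comm, ← nsmul_eq_mul]
  exact sum_le_card_nsmul P _ k fun b _ => le_trans (by gcongr) (hk b)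

lemma sum_retention_le {m k : ℝ} (hk : 0 ≤ k) (hkm : k ≤ m) {E : Finset (I × J)}
    (hl : ∀ i, (leftDegree E i : ℝ) ≤ k) (hr : ∀ j, (rightDegree E j : ℝ) ≤ k)
    {P : Finset I} {Y : Finset J} (hP : (#P : ℝ) ≤ m) (hY : (#Y : ℝ) ≤ m) :
    ∑ e ∈ E with e.1 ∈ P ∧ e.2 ∈ Y, retention m k E e ≤
      #P * #Y - (m - k) * (#P + #Y - m) := by
  set F := {e ∈ E | e.1 ∈ P ∧ e.2 ∈ Y}
  have hFE : F ⊆ E := filter_subset _ _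
  have hFP : ∀ e ∈ F, e.1 ∈ P := fun e he => (mem_filter.1 he).2.1
  have hFY : ∀ e ∈ F, e.2 ∈ Y := fun e he => (mem_filter.1 he).2.2
  have hFl : #F ≤ k * #P := card_le_mul_card_of_fiber_le hFE hFP hl
  have hFr : #F ≤ k * #Y := card_le_mul_card_of_fiber_le hFE hFY hr
  have hFPY : (#F : ℝ) ≤ #P * #Y := by
    have : F ⊆ P ×ˢ Y := fun e he => mem_product.2 (mem_filter.1 he).2
    exact_mod_cast (card_le_card this).trans_eq (card_product P Y)
  have hjensen := card_mul_excess_le_sum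
    (fun e he => Nat.cast_pos.2 (leftDegree_pos (hFE he)))
    (fun e he => Nat.cast_pos.2 (rightDegree_pos (hFE he)))
    (sum_one_div_card_fiber_le hFE hFP) (sum_one_div_card_fiber_le hFE hFY) hFl hFr
  have : 0 ≤ m := hk.trans hkm
  calc ∑ e ∈ F, retention m k E e
      = #F - k / (2 * m) * ∑ e ∈ F, excess k (leftDegree E e.1) (rightDegree E e.2) := by
        simp only [retention, sum_sub_distrib, sum_const, nsmul_one, mul_sum]
    _ ≤ #F - k / (2 * m) * (#F * excess k (#F / #P) (#F / #Y)) := by gcongr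
    _ ≤ #P * #Y - (m - k) * (#P + #Y - m) :=
        sub_mul_excess_le hk hkm (Nat.cast_nonneg _) hP hY
          (Nat.cast_nonneg _) hFPY hFl hFr

end Retention

lemma exists_mem_extremePoints_ge {E : Type*} [AddCommGroup E] [Module ℝ E]
    [TopologicalSpace E] [T2Space E] [IsTopologicalAddGroup E] [ContinuousSMul ℝ E]
    [LocallyConvexSpace ℝ E] {s : Set E} (hs : IsCompact s) (f : StrongDual ℝ E) {x : E}
    (hx : x ∈ s) : ∃ y ∈ s.extremePoints ℝ, f x ≤ f y := by
  have hexp : IsExposed ℝ s (f.toExposed s) := ContinuousLinearMap.toExposed.isExposed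
  obtain ⟨z, hz, hmax⟩ := hs.exists_isMaxOn ⟨x, hx⟩ f.continuous.continuousOn
  obtain ⟨y, hy⟩ := (hexp.isCompact hs).extremePoints_nonempty ⟨z, hz, hmax⟩
  exact ⟨y, hexp.isExtreme.extremePoints_subset_extremePoints hy, hy.1.2 x hx⟩

section WeightMatrix

variable {I J : Type*} [DecidableEq I] [DecidableEq J]

/-- The matrix of the edge weights `w`, with zero entries off `E`; for `w = 1` it is the adjacency
matrix of `E`. -/
def weightMatrix (E : Finset (I × J)) (w : I × J → ℝ) (i : I) (j : J) : ℝ :=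
  if (i, j) ∈ E then w (i, j) else 0

lemma sum_weightMatrix (E : Finset (I × J)) (w : I × J → ℝ) (P : Finset I) (Y : Finset J) :
    ∑ i ∈ P, ∑ j ∈ Y, weightMatrix E w i j = ∑ e ∈ E with e.1 ∈ P ∧ e.2 ∈ Y, w e := by
  simp only [weightMatrix]
  rw [← sum_product' P Y fun i j => if (i, j) ∈ E then w (i, j) else 0, ← sum_filter]
  refine sum_congr ?_ fun _ _ => rfl
  ext e
  simp [and_comm]

lemma sum_weightMatrix_row [Fintype J] (E : Finset (I × J)) (i : I) :
    ∑ j, weightMatrix E 1 i j = leftDegree E i := by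
  simpa [leftDegree] using sum_weightMatrix E 1 {i} univ

lemma sum_weightMatrix_col [Fintype I] (E : Finset (I × J)) (j : J) :
    ∑ i, weightMatrix E 1 i j = rightDegree E j := by
  simpa [rightDegree] using sum_weightMatrix E 1 univ {j}

lemma sum_mul_weightMatrix [Fintype I] [Fintype J] (E : Finset (I × J))
    (w : I × J → ℝ) (S : I → J → ℝ) :
    ∑ i, ∑ j, S i j * weightMatrix E w i j = ∑ e ∈ E, S e.1 e.2 * w e := by
  simpa [weightMatrix] using sum_weightMatrix E (fun e => S e.1 e.2 * w e) univ univ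

end WeightMatrix

section TransportPolytope

variable {I J : Type*} [Fintype I] [Fintype J]

/-- The capacitated transportation polytope: the matrices with entries between `l` and `h`, row
sums `ρ` and column sums `γ`. -/
def transportPolytope (l h : I → J → ℝ) (ρ : I → ℝ) (γ : J → ℝ) : Set (I → J → ℝ) :=
  {x | x ∈ Set.Icc l h ∧ (∀ i, ∑ j, x i j = ρ i) ∧ ∀ j, ∑ i, x i j = γ j}

lemma isCompact_transportPolytope (l h : I → J → ℝ) (ρ : I → ℝ) (γ : J → ℝ) :
    IsCompact (transportPolytope l h ρ γ) := by
  refine isCompact_Icc.inter_right (IsClosed.and ?_ ?_)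
  · simp only [Set.ofPred_forall]
    exact isClosed_iInter fun i => isClosed_eq (by fun_prop) continuous_const
  · simp only [Set.ofPred_forall]
    exact isClosed_iInter fun j => isClosed_eq (by fun_prop) continuous_const

lemma sum_rows_eq_sum_cols [DecidableEq I] [DecidableEq J] {F : Finset (I × J)} {z : I → J → ℝ}
    (hz : ∀ e ∉ F, z e.1 e.2 = 0) :
    ∑ i : F.image Prod.fst, ∑ j, z i j = ∑ j : F.image Prod.snd, ∑ i, z i j := by
  rw [sum_coe_sort (F.image Prod.fst) fun i => ∑ j, z i j,
    sum_coe_sort (F.image Prod.snd) fun j => ∑ i, z i j,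
    sum_subset (subset_univ _) fun i _ hi => sum_eq_zero fun j _ => hz (i, j) fun he =>
      hi (mem_image_of_mem Prod.fst he),
    sum_subset (subset_univ _) fun j _ hj => sum_eq_zero fun i _ => hz (i, j) fun he =>
      hj (mem_image_of_mem Prod.snd he), sum_comm]

/-- The entries of a matrix off `F`, together with its sums over the rows and columns met by `F`.
The kernel consists of the circulations supported on `F`. -/
def circulationMap [DecidableEq I] [DecidableEq J] (F : Finset (I × J)) :
    (I → J → ℝ) →ₗ[ℝ] (↥Fᶜ → ℝ) × (F.image Prod.fst → ℝ) × (F.image Prod.snd → ℝ) where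
  toFun z := (fun e => z e.1.1 e.1.2, fun i => ∑ j, z i j, fun j => ∑ i, z i j)
  map_add' z w := by ext <;> simp [sum_add_distrib]
  map_smul' a z := by ext <;> simp [mul_sum]

-- Row sums and column sums have the same total, so `circulationMap F` is not onto; as the degrees
-- are at least two, its codomain has at most the dimension of its domain.
lemma exists_circulation [DecidableEq I] [DecidableEq J] {F : Finset (I × J)} (hF : F.Nonempty)
    (hl : ∀ e ∈ F, 2 ≤ leftDegree F e.1) (hr : ∀ e ∈ F, 2 ≤ rightDegree F e.2) :
    ∃ z : I → J → ℝ, z ≠ 0 ∧ (∀ e ∉ F, z e.1 e.2 = 0) ∧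
      (∀ i, ∑ j, z i j = 0) ∧ ∀ j, ∑ i, z i j = 0 := by
  have hker : LinearMap.ker (circulationMap F) ≠ ⊥ := by
    intro hbot
    have hinj : Function.Injective (circulationMap F) := LinearMap.ker_eq_bot.1 hbot
    have hsurj : Function.Surjective (circulationMap F) := by
      refine (LinearMap.injective_iff_surjective_of_finrank_eq_finrank
        (le_antisymm (LinearMap.finrank_le_finrank_of_injective hinj) ?_)).1 hinj
      have hR : 2 * #(F.image Prod.fst) ≤ #F :=
        mul_card_image_le_card F 2 <| forall_mem_image.2 hl
      have hC : 2 * #(F.image Prod.snd) ≤ #F :=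
        mul_card_image_le_card F 2 <| forall_mem_image.2 hr
      have hcompl := F.card_add_card_compl
      simp only [Module.finrank_prod, Module.finrank_fintype_fun_eq_card, Fintype.card_coe,
        Module.finrank_pi_fintype, Fintype.card_prod, sum_const, smul_eq_mul,
        card_univ] at hcompl ⊢
      omega
    obtain ⟨e₀, he₀⟩ := hF
    obtain ⟨z, hz⟩ := hsurj (0, Pi.single ⟨e₀.1, mem_image_of_mem _ he₀⟩ 1, 0)
    simp only [circulationMap, LinearMap.coe_mk, AddHom.coe_mk, Prod.mk.injEq] at hz
    obtain ⟨hoff, hrow, hcol⟩ := hz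
    have := sum_rows_eq_sum_cols (F := F) (z := z) fun e he => congrFun hoff ⟨e, mem_compl.2 he⟩
    simp [congrFun hrow, congrFun hcol] at this
  obtain ⟨z, hz, hz₀⟩ := Submodule.exists_mem_ne_zero_of_ne_bot hker
  simp only [circulationMap, LinearMap.mem_ker, LinearMap.coe_mk, AddHom.coe_mk,
    Prod.mk_eq_zero] at hz
  obtain ⟨hoff, hrow, hcol⟩ := hz
  have hoff' : ∀ e ∉ F, z e.1 e.2 = 0 := fun e he => congrFun hoff ⟨e, mem_compl.2 he⟩
  refine ⟨z, hz₀, hoff', fun i => ?_, fun j => ?_⟩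
  · by_cases hi : i ∈ F.image Prod.fst
    · exact congrFun hrow ⟨i, hi⟩
    · exact sum_eq_zero fun j _ => hoff' (i, j) fun he => hi (mem_image_of_mem Prod.fst he)
  · by_cases hj : j ∈ F.image Prod.snd
    · exact congrFun hcol ⟨j, hj⟩
    · exact sum_eq_zero fun i _ => hoff' (i, j) fun he => hj (mem_image_of_mem Prod.snd he)

lemma eventually_add_smul_mem_transportPolytope {l h : I → J → ℝ} {ρ : I → ℝ} {γ : J → ℝ}
    {x z : I → J → ℝ} (hx : x ∈ transportPolytope l h ρ γ)
    (hz : ∀ i j, z i j ≠ 0 → x i j ∈ Set.Ioo (l i j) (h i j))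
    (hzl : ∀ i, ∑ j, z i j = 0) (hzr : ∀ j, ∑ i, z i j = 0) :
    ∀ᶠ ε : ℝ in 𝓝 0, x + ε • z ∈ transportPolytope l h ρ γ := by
  obtain ⟨⟨hlx, hxh⟩, hρ, hγ⟩ := hx
  have hbox : ∀ᶠ ε : ℝ in 𝓝 0, ∀ i j, (x + ε • z) i j ∈ Set.Icc (l i j) (h i j) := by
    refine eventually_all.2 fun i => eventually_all.2 fun j => ?_
    by_cases hij : z i j = 0
    · exact .of_forall fun ε => by simpa [hij] using ⟨hlx i j, hxh i j⟩
    · have hcont : Tendsto (fun ε : ℝ => (x + ε • z) i j) (𝓝 0) (𝓝 (x i j)) := by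
        have : Continuous fun ε : ℝ => (x + ε • z) i j := by
          simp only [Pi.add_apply, Pi.smul_apply]
          fun_prop
        simpa using this.tendsto 0
      exact hcont.eventually (Icc_mem_nhds (hz i j hij).1 (hz i j hij).2)
  filter_upwards [hbox] with ε hε
  refine ⟨⟨fun i j => (hε i j).1, fun i j => (hε i j).2⟩, fun i => ?_, fun j => ?_⟩
  · simp [sum_add_distrib, ← mul_sum, hρ, hzl]
  · simp [sum_add_distrib, ← mul_sum, hγ, hzr]

lemma eq_zero_of_mem_extremePoints_transportPolytope {l h : I → J → ℝ} {ρ : I → ℝ} {γ : J → ℝ}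
    {x z : I → J → ℝ} (hx : x ∈ (transportPolytope l h ρ γ).extremePoints ℝ)
    (hz : ∀ i j, z i j ≠ 0 → x i j ∈ Set.Ioo (l i j) (h i j))
    (hzl : ∀ i, ∑ j, z i j = 0) (hzr : ∀ j, ∑ i, z i j = 0) : z = 0 := by
  have hplus := eventually_add_smul_mem_transportPolytope hx.1 hz hzl hzr
  have hminus : ∀ᶠ ε : ℝ in 𝓝 0, x + (-ε) • z ∈ transportPolytope l h ρ γ :=
    (continuous_neg.tendsto' (0 : ℝ) 0 neg_zero).eventually hplus
  obtain ⟨ε, ⟨hp, hm⟩, hε⟩ := (((hplus.and hminus).filter_mono nhdsWithin_le_nhds).and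
    (self_mem_nhdsWithin (s := Set.Ioi (0 : ℝ)))).exists
  have hmid : x ∈ openSegment ℝ (x + ε • z) (x + (-ε) • z) :=
    ⟨1 / 2, 1 / 2, by norm_num, by norm_num, by norm_num, by module⟩
  have := hx.2 hp hm hmid
  exact (smul_eq_zero.1 (add_eq_left.1 this)).resolve_left (ne_of_gt hε)

lemma exists_ne_notMem_of_sum_mem {ι A : Type*} [Fintype ι] [AddCommGroup A] (G : AddSubgroup A)
    {f : ι → A} (hsum : ∑ i, f i ∈ G) {i : ι} (hi : f i ∉ G) : ∃ i' ≠ i, f i' ∉ G := by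
  classical
  by_contra! h
  rw [← add_sum_erase univ f (mem_univ i)] at hsum
  exact hi ((G.add_mem_cancel_right (G.sum_mem fun i' hi' => h i' (ne_of_mem_erase hi'))).1 hsum)

lemma mem_range_intCast_of_mem_extremePoints {l h : I → J → ℝ} {ρ : I → ℝ} {γ : J → ℝ}
    (hl : ∀ i j, l i j ∈ (Int.castAddHom ℝ).range) (hh : ∀ i j, h i j ∈ (Int.castAddHom ℝ).range)
    (hρ : ∀ i, ρ i ∈ (Int.castAddHom ℝ).range) (hγ : ∀ j, γ j ∈ (Int.castAddHom ℝ).range)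
    {x : I → J → ℝ} (hx : x ∈ (transportPolytope l h ρ γ).extremePoints ℝ) (i : I) (j : J) :
    x i j ∈ (Int.castAddHom ℝ).range := by
  classical
  set Z := (Int.castAddHom ℝ).range
  by_contra hij
  obtain ⟨⟨hlx, hxh⟩, hxρ, hxγ⟩ := hx.1
  let F : Finset (I × J) := {e | x e.1 e.2 ∉ Z}
  have hmem : ∀ i j, (i, j) ∈ F ↔ x i j ∉ Z := by simp [F]
  have hleft : ∀ e ∈ F, 2 ≤ leftDegree F e.1 := by
    rintro ⟨i, j⟩ he
    obtain ⟨j', hj', hx'⟩ :=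
      exists_ne_notMem_of_sum_mem Z (f := fun j => x i j) ((hxρ i).symm ▸ hρ i)
        ((hmem i j).1 he)
    exact one_lt_card.2 ⟨(i, j), by simpa using he, (i, j'), by simpa [hmem] using hx',
      by simpa using hj'.symm⟩
  have hright : ∀ e ∈ F, 2 ≤ rightDegree F e.2 := by
    rintro ⟨i, j⟩ he
    obtain ⟨i', hi', hx'⟩ :=
      exists_ne_notMem_of_sum_mem Z (f := fun i => x i j) ((hxγ j).symm ▸ hγ j)
        ((hmem i j).1 he)
    exact one_lt_card.2 ⟨(i, j), by simpa using he, (i', j), by simpa [hmem] using hx',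
      by simpa using hi'.symm⟩
  obtain ⟨z, hz₀, hzF, hzl, hzr⟩ := exists_circulation ⟨(i, j), (hmem i j).2 hij⟩ hleft hright
  refine hz₀ (eq_zero_of_mem_extremePoints_transportPolytope hx (fun i j hz => ?_) hzl hzr)
  have hfrac : x i j ∉ Z := fun hx' => hz (hzF (i, j) fun he => (hmem i j).1 he hx')
  exact ⟨(hlx i j).lt_of_ne fun h => hfrac (h ▸ hl i j),
    (hxh i j).lt_of_ne fun h => hfrac (h ▸ hh i j)⟩

/-- The Gale–Hoffman condition: the net demand of the rows `U` and columns `B` does not exceed what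
the bounds `l` and `h` let pass. -/
def CutCondition [DecidableEq I] [DecidableEq J] (l h : I → J → ℝ) (ρ : I → ℝ) (γ : J → ℝ) :
    Prop :=
  ∀ (U : Finset I) (B : Finset J), ∑ i ∈ U, ρ i - ∑ j ∈ B, γ j ≤
    ∑ i ∈ U, ∑ j ∈ Bᶜ, h i j - ∑ i ∈ Uᶜ, ∑ j ∈ B, l i j

/-- The indicator of `a ≤ θ < b`. As a function of `θ` its integral is the positive part of `b - a`,
so that inequalities between potentials decompose into their level sets. -/
noncomputable def level (θ a b : ℝ) : ℝ := (Set.Ico a b).indicator 1 θ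

lemma integrable_level (a b : ℝ) : Integrable fun θ => level θ a b :=
  (integrable_indicator_iff measurableSet_Ico).2 (integrableOn_const (by simp))

lemma integral_level (a b : ℝ) : ∫ θ, level θ a b = max (b - a) 0 := by
  simp only [level]
  rw [integral_indicator_one measurableSet_Ico, Real.volume_real_Ico]

lemma CutCondition.level_le [DecidableEq I] [DecidableEq J] {l h : I → J → ℝ} {ρ : I → ℝ}
    {γ : J → ℝ} (hcut : CutCondition l h ρ γ) {u : I → ℝ} {b : J → ℝ} {L : ℝ}
    (hu : ∀ i, L ≤ u i) (hb : ∀ j, L ≤ b j) (θ : ℝ) :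
    ∑ i, ρ i * level θ L (u i) - ∑ j, γ j * level θ L (b j) ≤
      ∑ i, ∑ j, (h i j * level θ (b j) (u i) - l i j * level θ (u i) (b j)) := by
  have hlevel : ∀ a b, level θ a b = if a ≤ θ ∧ θ < b then 1 else 0 := fun a b => by
    simp [level, Set.indicator_apply]
  rcases lt_or_ge θ L with hθ | hθ
  · have hu' : ∀ i, ¬ u i ≤ θ := fun i => not_le.2 (hθ.trans_le (hu i))
    have hb' : ∀ j, ¬ b j ≤ θ := fun j => not_le.2 (hθ.trans_le (hb j))
    simp [hlevel, not_le.2 hθ, hu', hb']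
  · have key := hcut {i | θ < u i} {j | θ < b j}
    have hh : ∀ i j, h i j * level θ (b j) (u i) =
        if θ < u i then if b j ≤ θ then h i j else 0 else 0 := fun i j => by
      simp [hlevel, ← ite_and, and_comm]
    simp only [hh]
    simpa only [compl_filter, not_lt, sum_filter, hlevel, hθ, true_and, ite_and, mul_ite,
      mul_one, mul_zero, sum_sub_distrib, sum_ite_irrel, sum_const_zero] using key

lemma CutCondition.potential_le [DecidableEq I] [DecidableEq J] {l h : I → J → ℝ} {ρ : I → ℝ}
    {γ : J → ℝ} (hcut : CutCondition l h ρ γ) (hργ : ∑ i, ρ i = ∑ j, γ j) (u : I → ℝ)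
    (b : J → ℝ) :
    ∑ i, ρ i * u i - ∑ j, γ j * b j ≤
      ∑ i, ∑ j, (h i j * max (u i - b j) 0 - l i j * max (b j - u i) 0) := by
  obtain ⟨L, hL⟩ := ((Set.finite_range u).union (Set.finite_range b)).bddBelow
  have hu : ∀ i, L ≤ u i := fun i => hL (.inl ⟨i, rfl⟩)
  have hb : ∀ j, L ≤ b j := fun j => hL (.inr ⟨j, rfl⟩)
  have hlevel : ∀ (c : ℝ) (a b : ℝ), Integrable fun θ => c * level θ a b := fun c a b =>
    (integrable_level a b).const_mul c
  have hI : Integrable fun θ => ∑ i, ρ i * level θ L (u i) :=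
    integrable_finsetSum _ fun i _ => hlevel _ _ _
  have hJ : Integrable fun θ => ∑ j, γ j * level θ L (b j) :=
    integrable_finsetSum _ fun j _ => hlevel _ _ _
  have hIJ : ∀ i j, Integrable fun θ =>
      h i j * level θ (b j) (u i) - l i j * level θ (u i) (b j) := fun i j =>
    (hlevel _ _ _).sub (hlevel _ _ _)
  have hI' : ∀ i, Integrable fun θ =>
      ∑ j, (h i j * level θ (b j) (u i) - l i j * level θ (u i) (b j)) := fun i =>
    integrable_finsetSum _ fun j _ => hIJ i j
  have hint := integral_mono (hI.sub hJ) (integrable_finsetSum _ fun i _ => hI' i)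
    (hcut.level_le hu hb)
  have hrhs : ∫ θ, ∑ i, ∑ j, (h i j * level θ (b j) (u i) - l i j * level θ (u i) (b j)) =
      ∑ i, ∑ j, (h i j * max (u i - b j) 0 - l i j * max (b j - u i) 0) := by
    rw [integral_finsetSum _ fun i _ => hI' i]
    refine sum_congr rfl fun i _ => ?_
    rw [integral_finsetSum _ fun j _ => hIJ i j]
    refine sum_congr rfl fun j _ => ?_
    rw [integral_sub (hlevel _ _ _) (hlevel _ _ _), integral_const_mul, integral_const_mul,
      integral_level, integral_level]
  have hlhs : ∫ θ, (∑ i, ρ i * level θ L (u i) - ∑ j, γ j * level θ L (b j)) =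
      ∑ i, ρ i * u i - ∑ j, γ j * b j := by
    rw [integral_sub hI hJ, integral_finsetSum _ fun i _ => hlevel _ _ _,
      integral_finsetSum _ fun j _ => hlevel _ _ _]
    simp only [integral_const_mul, integral_level, max_eq_left (sub_nonneg.2 (hu _)),
      max_eq_left (sub_nonneg.2 (hb _)), mul_sub, sum_sub_distrib, ← sum_mul, hργ]
    ring
  exact hlhs.symm.trans_le (hint.trans_eq hrhs)

/-- The row and column sums of a matrix. -/
def marginals : (I → J → ℝ) →ₗ[ℝ] (I → ℝ) × (J → ℝ) where
  toFun x := (fun i => ∑ j, x i j, fun j => ∑ i, x i j)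
  map_add' x y := by ext <;> simp [sum_add_distrib]
  map_smul' a x := by ext <;> simp [mul_sum]

lemma exists_potentials (f : (I → ℝ) × (J → ℝ) →ₗ[ℝ] ℝ) :
    ∃ (u : I → ℝ) (b : J → ℝ), ∀ r c, f (r, c) = ∑ i, r i * u i - ∑ j, c j * b j := by
  classical
  refine ⟨fun i => f (fun i' => if i = i' then 1 else 0, 0),
    fun j => -f (0, fun j' => if j = j' then 1 else 0), fun r c => ?_⟩
  have hr := (f ∘ₗ .inl ℝ (I → ℝ) (J → ℝ)).pi_apply_eq_sum_univ r
  have hc := (f ∘ₗ .inr ℝ (I → ℝ) (J → ℝ)).pi_apply_eq_sum_univ c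
  simp only [LinearMap.comp_apply, LinearMap.inl_apply, LinearMap.inr_apply,
    smul_eq_mul] at hr hc
  have hsplit : f (r, c) = f (r, 0) + f (0, c) := by simp [← map_add]
  simp [hsplit, hr, hc]

lemma CutCondition.nonempty_transportPolytope [DecidableEq I] [DecidableEq J] {l h : I → J → ℝ}
    {ρ : I → ℝ} {γ : J → ℝ} (hcut : CutCondition l h ρ γ) (hργ : ∑ i, ρ i = ∑ j, γ j)
    (hlh : l ≤ h) : (transportPolytope l h ρ γ).Nonempty := by
  suffices hmem : (ρ, γ) ∈ marginals '' Set.Icc l h by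
    obtain ⟨x, hx, hT⟩ := hmem
    exact ⟨x, hx, congrFun (congrArg Prod.fst hT), congrFun (congrArg Prod.snd hT)⟩
  by_contra hmem
  obtain ⟨f, t, hft, htf⟩ := geometric_hahn_banach_closed_point
    ((convex_Icc l h).linear_image marginals)
    (isCompact_Icc.image marginals.continuous_of_finiteDimensional).isClosed hmem
  obtain ⟨u, b, hf⟩ := exists_potentials (f : (I → ℝ) × (J → ℝ) →ₗ[ℝ] ℝ)
  let x : I → J → ℝ := fun i j => if b j < u i then h i j else l i j
  have hx : x ∈ Set.Icc l h := by
    constructor <;> intro i j <;> simp only [x] <;> split_ifs <;> simp [hlh i j]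
  have hfx : f (marginals x) =
      ∑ i, ∑ j, (h i j * max (u i - b j) 0 - l i j * max (b j - u i) 0) := by
    refine (hf _ _).trans ?_
    simp only [sum_mul]
    rw [sum_comm (f := fun j i => x i j * b j)]
    simp only [← sum_sub_distrib]
    refine sum_congr rfl fun i _ => sum_congr rfl fun j _ => ?_
    simp only [x]
    split_ifs with hij
    · rw [max_eq_left (by linarith), max_eq_right (by linarith)]; ring
    · rw [max_eq_right (by linarith), max_eq_left (by linarith)]; ring
  have hlt : f (marginals x) < f (ρ, γ) := (hft _ ⟨x, hx, rfl⟩).trans htf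
  exact (hlt.trans_eq (hf ρ γ)).not_ge (hfx ▸ hcut.potential_le hργ u b)

lemma exists_eq_weightMatrix_of_mem_extremePoints [DecidableEq I] [DecidableEq J]
    {K : Finset (I × J)} {ρ : I → ℕ} {γ : J → ℕ} {x : I → J → ℝ}
    (hx : x ∈ (transportPolytope 0 (weightMatrix K 1) (fun i => ρ i) fun j => γ j).extremePoints
      ℝ) : ∃ M ⊆ K, x = weightMatrix M 1 := by
  obtain ⟨⟨hx₀, hxK⟩, -, -⟩ := hx.1
  have hx_or : ∀ i j, x i j = 0 ∨ x i j = 1 := fun i j => by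
    obtain ⟨a, ha : (a : ℝ) = x i j⟩ := mem_range_intCast_of_mem_extremePoints
      (fun _ _ => zero_mem _) (fun i j => ⟨if (i, j) ∈ K then 1 else 0, by simp [weightMatrix]⟩)
      (fun i => ⟨ρ i, by simp⟩) (fun j => ⟨γ j, by simp⟩) hx i j
    have h₀ : (0 : ℝ) ≤ a := (hx₀ i j).trans_eq ha.symm
    have h₁ : (a : ℝ) ≤ 1 := ha.trans_le
      ((hxK i j).trans (by simp only [weightMatrix]; split_ifs <;> simp))
    rw [← ha]
    norm_cast at h₀ h₁ ⊢
    omega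
  refine ⟨({e | x e.1 e.2 = 1} : Finset (I × J)), fun e he => ?_, ?_⟩
  · by_contra heK
    have := hxK e.1 e.2
    rw [(mem_filter.1 he).2, weightMatrix, if_neg heK] at this
    exact one_pos.not_ge this
  · ext i j
    rcases hx_or i j with h | h <;> simp [weightMatrix, h]

lemma exists_subset_of_mem_transportPolytope [DecidableEq I] [DecidableEq J]
    {K : Finset (I × J)} {ρ : I → ℕ} {γ : J → ℕ} {y : I → J → ℝ}
    (hy : y ∈ transportPolytope 0 (weightMatrix K 1) (fun i => ρ i) fun j => γ j)
    (S : I → J → ℝ) :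
    ∃ M ⊆ K, (∀ i, leftDegree M i = ρ i) ∧ (∀ j, rightDegree M j = γ j) ∧
      ∑ i, ∑ j, S i j * y i j ≤ ∑ e ∈ M, S e.1 e.2 := by
  let f : (I → J → ℝ) →ₗ[ℝ] ℝ :=
    ∑ i, ∑ j, S i j • (.proj (φ := fun _ : J => ℝ) j ∘ₗ .proj i)
  have hf : ∀ x, f x = ∑ i, ∑ j, S i j * x i j := by simp [f]
  obtain ⟨x, hx, hyx⟩ := exists_mem_extremePoints_ge (isCompact_transportPolytope _ _ _ _)
    f.toContinuousLinearMap hy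
  obtain ⟨M, hMK, rfl⟩ := exists_eq_weightMatrix_of_mem_extremePoints hx
  obtain ⟨-, hρ, hγ⟩ := hx.1
  simp only [LinearMap.coe_toContinuousLinearMap', hf, sum_mul_weightMatrix, Pi.one_apply,
    mul_one] at hyx
  simp only [sum_weightMatrix_row, sum_weightMatrix_col, Nat.cast_inj] at hρ hγ
  exact ⟨M, hMK, hρ, hγ, hyx⟩

end TransportPolytope

section Cut

variable {V : Type*} [DecidableEq V]

/-- The pairs of `M` with exactly one coordinate in `A`. -/
def cutEdges (A : Finset V) (M : Finset (V × V)) : Finset (V × V) := {e ∈ M | e.1 ∈ A ↔ e.2 ∉ A}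

lemma sum_weightMatrix_of_subset_cutEdges {A : Finset V} {E M : Finset (V × V)}
    (hE : E ⊆ cutEdges A M) (w : V × V → ℝ) (P Y : Finset V) :
    ∑ i ∈ P, ∑ j ∈ Y, weightMatrix E w i j =
      ∑ i ∈ P ∩ A, ∑ j ∈ Y \ A, weightMatrix E w i j +
        ∑ i ∈ P \ A, ∑ j ∈ Y ∩ A, weightMatrix E w i j := by
  have hzero : ∀ i j, ¬(i ∈ A ↔ j ∉ A) → weightMatrix E w i j = 0 := fun i j hij =>
    if_neg fun he => hij (mem_filter.1 (hE he)).2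
  rw [← sum_inter_add_sum_sdiff P A]
  congr 1 <;> refine sum_congr rfl fun i hi => ?_
  · refine (sum_subset sdiff_subset fun j hj hjA => hzero i j ?_).symm
    simp_all
  · refine (sum_subset inter_subset_left fun j hj hjA => hzero i j ?_).symm
    simp_all

variable [Fintype V]

lemma sum_weightMatrix_cutEdges_univ (A P Y : Finset V) :
    ∑ i ∈ P, ∑ j ∈ Y, weightMatrix (cutEdges A univ) 1 i j =
      #(P ∩ A) * #(Y \ A) + #(P \ A) * #(Y ∩ A) := by
  have hone : ∀ P Y : Finset V, (∀ i ∈ P, ∀ j ∈ Y, (i ∈ A ↔ j ∉ A)) →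
      ∑ i ∈ P, ∑ j ∈ Y, weightMatrix (cutEdges A univ) 1 i j = #P * #Y := fun P Y h => by
    have hval : ∀ i ∈ P, ∀ j ∈ Y, weightMatrix (cutEdges A univ) 1 i j = 1 := fun i hi j hj =>
      if_pos (mem_filter.2 ⟨mem_univ (i, j), h i hi j hj⟩)
    rw [sum_congr rfl fun i hi => sum_congr rfl (hval i hi)]
    simp
  rw [sum_weightMatrix_of_subset_cutEdges subset_rfl, hone, hone] <;> simp +contextual

lemma cutCondition_retention {m k : ℝ} (hk : 0 ≤ k) (hkm : k ≤ m) {A : Finset V}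
    (hA : (#A : ℝ) = m) (hAc : (#Aᶜ : ℝ) = m) {M : Finset (V × V)}
    (hl : ∀ i, (leftDegree (cutEdges A M) i : ℝ) ≤ k)
    (hr : ∀ j, (rightDegree (cutEdges A M) j : ℝ) ≤ k) :
    CutCondition (weightMatrix (cutEdges A M) (retention m k (cutEdges A M)))
      (weightMatrix (cutEdges A univ) 1) (fun _ => k) fun _ => k := by
  intro U B
  have hlower := sum_weightMatrix_of_subset_cutEdges (A := A) (M := M) subset_rfl
    (retention m k (cutEdges A M)) Uᶜ B
  rw [sum_weightMatrix (P := Uᶜ ∩ A), sum_weightMatrix (P := Uᶜ \ A)] at hlower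
  have hle : ∀ P : Finset V, (#(P ∩ A) : ℝ) ≤ m := fun P =>
    hA ▸ by exact_mod_cast card_le_card inter_subset_right
  have hle' : ∀ P : Finset V, (#(P \ A) : ℝ) ≤ m := fun P =>
    hAc ▸ by exact_mod_cast card_le_card (sdiff_eq_inter_compl P A ▸ inter_subset_right)
  have h₁ := sum_retention_le hk hkm hl hr (hle Uᶜ) (hle' B)
  have h₂ := sum_retention_le hk hkm hl hr (hle' Uᶜ) (hle B)
  have hcard : ∀ P : Finset V, (#P : ℝ) = #(P ∩ A) + #(P \ A) := fun P => by
    exact_mod_cast (card_inter_add_card_sdiff P A).symm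
  have hinter : ∀ P : Finset V, (#(Pᶜ ∩ A) : ℝ) = m - #(P ∩ A) := fun P => by
    rw [← hA, eq_sub_iff_add_eq, inter_comm, inter_comm P, ← sdiff_eq_inter_compl]
    exact_mod_cast card_sdiff_add_card_inter A P
  have hsdiff : ∀ P : Finset V, (#(Pᶜ \ A) : ℝ) = m - #(P \ A) := fun P => by
    rw [← hAc, eq_sub_iff_add_eq, sdiff_eq_inter_compl, sdiff_eq_inter_compl P, inter_comm,
      inter_comm P, ← sdiff_eq_inter_compl]
    exact_mod_cast card_sdiff_add_card_inter Aᶜ P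
  simp only [sum_weightMatrix_cutEdges_univ, hlower, sum_const, nsmul_eq_mul, hcard U, hcard B]
  rw [hinter] at h₁
  rw [hsdiff] at h₂
  rw [hinter, hsdiff]
  linarith

lemma exists_subset_cutEdges_of_half {m k : ℕ} (hkm : k ≤ m) {A : Finset V}
    (hA : #A = m) (hAc : #Aᶜ = m) {M : Finset (V × V)} (hl : ∀ i, leftDegree M i ≤ k)
    (hr : ∀ j, rightDegree M j ≤ k) {S : V → V → ℝ} (hS : ∀ i j, 0 ≤ S i j) :
    ∃ M' ⊆ cutEdges A univ, (∀ i, leftDegree M' i = k) ∧ (∀ j, rightDegree M' j = k) ∧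
      ∑ e ∈ cutEdges A M, S e.1 e.2 * retention m k (cutEdges A M) e ≤
        ∑ e ∈ M', S e.1 e.2 := by
  set E := cutEdges A M
  have hEl : ∀ i, (leftDegree E i : ℝ) ≤ k := fun i => by
    exact_mod_cast (card_le_card (filter_subset_filter _ (filter_subset _ M))).trans (hl i)
  have hEr : ∀ j, (rightDegree E j : ℝ) ≤ k := fun j => by
    exact_mod_cast (card_le_card (filter_subset_filter _ (filter_subset _ M))).trans (hr j)
  have hk : (0 : ℝ) ≤ k := k.cast_nonneg
  have hkm' : (k : ℝ) ≤ m := by exact_mod_cast hkm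
  have hret₀ : 0 ≤ weightMatrix E (retention m k E) := fun i j => by
    simp only [weightMatrix]
    split_ifs
    exacts [retention_nonneg hk hkm' hEl hEr _, le_rfl]
  have hret₁ : weightMatrix E (retention m k E) ≤ weightMatrix (cutEdges A univ) 1 := fun i j => by
    by_cases he : (i, j) ∈ E
    · have he' : (i, j) ∈ cutEdges A univ := filter_subset_filter _ (subset_univ M) he
      simpa only [weightMatrix, if_pos he, if_pos he', Pi.one_apply] using
        retention_le_one m.cast_nonneg hk E (i, j)
    · simp only [weightMatrix, if_neg he]
      split_ifs <;> simp
  obtain ⟨y, ⟨hy, hyU⟩, hyl, hyr⟩ := (cutCondition_retention (A := A) (M := M) hk hkm'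
    (by exact_mod_cast hA) (by exact_mod_cast hAc) hEl hEr).nonempty_transportPolytope rfl hret₁
  obtain ⟨M', hM', hl', hr', hle⟩ := exists_subset_of_mem_transportPolytope (ρ := fun _ => k)
    (γ := fun _ => k) ⟨⟨hret₀.trans hy, hyU⟩, hyl, hyr⟩ S
  refine ⟨M', hM', hl', hr', ?_⟩
  rw [← sum_mul_weightMatrix]
  exact (sum_le_sum fun i _ => sum_le_sum fun j _ =>
    mul_le_mul_of_nonneg_left (hy i j) (hS i j)).trans hle

end Cut

section Halves

variable {V : Type*}

lemma card_mul_card_mul_excess_le [DecidableEq V] {k : ℕ} {R C : Finset V} (hR : #R = k)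
    (hC : #C = k) (A : Finset V) :
    #((R \ C) ∩ A) * #((C \ R) \ A) * (k * excess k #(C \ A) #(R ∩ A)) ≤
      #(R \ C) * max ((#(R ∩ A) : ℝ) - #(C ∩ A)) 0 ^ 2 := by
  have hsdiff : #(R \ C) = #(C \ R) := card_sdiff_comm (hR.trans hC.symm)
  have hRA : #((R \ C) ∩ A) + #((R ∩ C) ∩ A) = #(R ∩ A) := by
    rw [sdiff_inter_right_comm, inter_right_comm]
    exact card_sdiff_add_card_inter _ _
  have hCA : #((C \ R) \ A) + #((R ∩ C) \ A) = #(C \ A) := by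
    rw [sdiff_right_comm, inter_comm R, ← sdiff_inter_right_comm]
    exact card_sdiff_add_card_inter _ _
  have h₁ := card_sdiff_add_card_inter R C
  have h₂ := card_sdiff_add_card_inter (R ∩ C) A
  have h₃ := card_sdiff_add_card_inter C A
  have hk : (k : ℝ) = #(R \ C) + #((R ∩ C) ∩ A) + #((R ∩ C) \ A) := by
    exact_mod_cast (by omega : k = #(R \ C) + #((R ∩ C) ∩ A) + #((R ∩ C) \ A))
  have hdiff : (#(R ∩ A) : ℝ) - #(C ∩ A) = #((R \ C) ∩ A) + #((C \ R) \ A) - #(R \ C) := by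
    have : #(R ∩ A) + #(R \ C) = #((R \ C) ∩ A) + #((C \ R) \ A) + #(C ∩ A) := by omega
    rw [sub_eq_sub_iff_add_eq_add]
    exact_mod_cast this
  rw [hdiff, hk, ← hRA, ← hCA]
  push_cast
  refine mul_mul_excess_le (Nat.cast_nonneg _) (Nat.cast_nonneg _) ?_ ?_ (Nat.cast_nonneg _)
    (Nat.cast_nonneg _)
  · exact_mod_cast card_le_card inter_subset_left
  · exact_mod_cast (card_le_card sdiff_subset).trans_eq hsdiff.symm

lemma map_swap_eq_self [DecidableEq V] {s : Finset V} {a b : V} (h : a ∈ s ↔ b ∈ s) :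
    s.map (Equiv.swap a b).toEmbedding = s := by
  ext x
  rw [mem_map_equiv, Equiv.symm_swap, Equiv.swap_apply_def]
  split_ifs with h₁ h₂ <;> simp_all

variable [Fintype V]

lemma card_powersetCard_filter_mem_notMem [DecidableEq V] (s : ℕ) {u v : V} (huv : u ≠ v) :
    #{A ∈ powersetCard (s + 1) univ | u ∈ A ∧ v ∉ A} = (Fintype.card V - 2).choose s := by
  rw [← card_pair huv, ← card_compl, ← card_powersetCard]
  refine card_nbij' (fun A => A.erase u) (insert u) (fun A hA => ?_) (fun B hB => ?_)
    (fun A hA => ?_) fun B hB => ?_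
  · simp only [mem_coe, mem_filter, mem_powersetCard, subset_univ, true_and] at hA ⊢
    refine ⟨fun x hx => ?_, by rw [card_erase_of_mem hA.2.1, hA.1, Nat.add_sub_cancel]⟩
    have hxv : x ≠ v := fun h => hA.2.2 (h ▸ mem_of_mem_erase hx)
    simp [ne_of_mem_erase hx, hxv]
  · have hu : u ∉ B := fun h => by simpa using (mem_powersetCard.1 hB).1 h
    have hv : v ∉ B := fun h => by simpa using (mem_powersetCard.1 hB).1 h
    simp [card_insert_of_notMem hu, (mem_powersetCard.1 hB).2, hv, huv.symm]
  · exact insert_erase (mem_filter.1 hA).2.1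
  · exact erase_insert fun h => by simpa using (mem_powersetCard.1 hB).1 h

lemma sum_powersetCard_sq_of_sum_eq_zero (s : ℕ) {x : V → ℝ} (hx : ∑ u, x u = 0) :
    ∑ A ∈ powersetCard (s + 1) univ, (∑ u ∈ A, x u) ^ 2 =
      (Fintype.card V - 2).choose s * ∑ u, x u ^ 2 := by
  classical
  have hsq : ∀ A : Finset V, (∑ u ∈ A, x u) ^ 2 =
      -∑ u, ∑ v, if u ∈ A ∧ v ∉ A then x u * x v else 0 := fun A => by
    have hAc : ∑ v ∈ Aᶜ, x v = -∑ u ∈ A, x u := by linarith [sum_add_sum_compl A x]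
    have hprod : ∑ u, ∑ v, (if u ∈ A ∧ v ∉ A then x u * x v else 0) =
        (∑ u ∈ A, x u) * ∑ v ∈ Aᶜ, x v := by
      rw [sum_mul_sum, ← sum_product', ← sum_product', ← sum_filter]
      congr 1
      ext
      simp
    rw [hprod, hAc]
    ring
  have hpair : ∀ u v, ∑ A ∈ powersetCard (s + 1) univ,
      (if u ∈ A ∧ v ∉ A then x u * x v else 0) =
        (Fintype.card V - 2).choose s * (x u * x v - if u = v then x u * x v else 0) := by
    intro u v
    rw [← sum_filter, sum_const, nsmul_eq_mul]
    by_cases huv : u = v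
    · simp [huv]
    · rw [card_powersetCard_filter_mem_notMem s huv, if_neg huv, sub_zero]
  simp only [hsq, sum_neg_distrib]
  rw [sum_comm, sum_congr rfl fun u _ => sum_comm]
  simp only [hpair, ← mul_sum, sum_sub_distrib, sum_ite_eq, mem_univ, if_true, hx, mul_zero,
    zero_sub, mul_neg, sum_neg_distrib, neg_neg, sq]

lemma sum_powersetCard_compl [DecidableEq V] {m : ℕ} (hV : Fintype.card V = 2 * m)
    (F : Finset V → ℝ) :
    ∑ A ∈ powersetCard m univ, F Aᶜ = ∑ A ∈ powersetCard m univ, F A := by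
  have hcompl : ∀ A ∈ powersetCard m (univ : Finset V), Aᶜ ∈ powersetCard m univ := by
    intro A hA
    rw [mem_powersetCard_univ] at hA ⊢
    rw [card_compl, hA, hV, two_mul, Nat.add_sub_cancel]
  exact sum_nbij' compl compl hcompl hcompl (fun A _ => compl_compl A) (fun A _ => compl_compl A)
    fun _ _ => rfl

lemma two_mul_sum_powersetCard_max_sq {m : ℕ} (hV : Fintype.card V = 2 * (m + 1)) {x : V → ℝ}
    (hx : ∑ u, x u = 0) :
    2 * ∑ A ∈ powersetCard (m + 1) univ, max (∑ u ∈ A, x u) 0 ^ 2 =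
      m.centralBinom * ∑ u, x u ^ 2 := by
  classical
  have hsplit : ∀ A : Finset V, (∑ u ∈ A, x u) ^ 2 =
      max (∑ u ∈ A, x u) 0 ^ 2 + max (∑ u ∈ Aᶜ, x u) 0 ^ 2 := fun A => by
    have hAc : ∑ u ∈ Aᶜ, x u = -∑ u ∈ A, x u := by linarith [sum_add_sum_compl A x]
    rw [hAc]
    rcases le_total (∑ u ∈ A, x u) 0 with h | h
    · rw [max_eq_right h, max_eq_left (neg_nonneg.2 h)]; ring
    · rw [max_eq_left h, max_eq_right (neg_nonpos.2 h)]; ring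
  have hcard : Fintype.card V - 2 = 2 * m := by omega
  rw [Nat.centralBinom_eq_two_mul_choose, ← hcard, ← sum_powersetCard_sq_of_sum_eq_zero m hx,
    sum_congr rfl fun A _ => hsplit A, sum_add_distrib,
    sum_powersetCard_compl hV fun A => max (∑ u ∈ A, x u) 0 ^ 2, two_mul]

variable [DecidableEq V]

lemma sum_powersetCard_filter_iff {m : ℕ} (hV : Fintype.card V = 2 * m) {F : Finset V → ℝ}
    (hF : ∀ A, F Aᶜ = F A) (u v : V) :
    ∑ A ∈ powersetCard m univ with (u ∈ A ↔ v ∉ A), F A =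
      2 * ∑ A ∈ powersetCard m univ with u ∈ A ∧ v ∉ A, F A := by
  have hcompl := sum_powersetCard_compl hV fun A => if u ∈ A ∧ v ∉ A then F A else 0
  have hsplit : ∀ A, (if (u ∈ A ↔ v ∉ A) then F A else 0) =
      (if u ∈ Aᶜ ∧ v ∉ Aᶜ then F Aᶜ else 0) + if u ∈ A ∧ v ∉ A then F A else 0 := fun A => by
    by_cases hu : u ∈ A <;> by_cases hv : v ∈ A <;> simp [hu, hv, hF]
  rw [sum_filter, sum_filter, sum_congr rfl fun A _ => hsplit A, sum_add_distrib, hcompl, two_mul]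

lemma sum_powersetCard_filter_eq_of_mem_sdiff (s : ℕ) {R C : Finset V} (f : ℕ → ℕ → ℝ)
    {i i' j j' : V} (hi : i ∈ R \ C) (hi' : i' ∈ R \ C) (hj : j ∈ C \ R) (hj' : j' ∈ C \ R) :
    ∑ A ∈ powersetCard s univ with i ∈ A ∧ j ∉ A, f #(C \ A) #(R ∩ A) =
      ∑ A ∈ powersetCard s univ with i' ∈ A ∧ j' ∉ A, f #(C \ A) #(R ∩ A) := by
  simp only [Finset.mem_sdiff] at hi hi' hj hj'
  have hne : ∀ {u v : V}, u ∈ R → v ∉ R → u ≠ v := fun hu hv h => hv (h ▸ hu)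
  let π : Equiv.Perm V := (Equiv.swap j j').trans (Equiv.swap i i')
  have hπ : ∀ B : Finset V, (i ∈ B ↔ i' ∈ B) → (j ∈ B ↔ j' ∈ B) → B.map π.toEmbedding = B :=
    fun B hiB hjB => by
      rw [Equiv.trans_toEmbedding, ← Finset.map_map, map_swap_eq_self hjB, map_swap_eq_self hiB]
  have hπR := hπ R (by simp [hi, hi']) (by simp [hj, hj'])
  have hπC := hπ C (by simp [hi, hi']) (by simp [hj, hj'])
  have hπi : π.symm i' = i := by
    simp [π, Equiv.swap_apply_of_ne_of_ne (hne hi.1 hj.2) (hne hi.1 hj'.2)]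
  have hπj : π.symm j' = j := by
    simp [π, Equiv.swap_apply_of_ne_of_ne (hne hi.1 hj'.2).symm (hne hi'.1 hj'.2).symm]
  refine sum_equiv π.finsetCongr (fun A => ?_) fun A _ => ?_
  · simp only [mem_filter, mem_powersetCard_univ, Equiv.finsetCongr_apply, card_map,
      mem_map_equiv, hπi, hπj]
  · rw [Equiv.finsetCongr_apply]
    nth_rewrite 2 [← hπC, ← hπR]
    rw [← Finset.map_sdiff, ← map_inter, card_map, card_map]

lemma card_mul_card_mul_sum_powersetCard_filter (s : ℕ) {R C : Finset V} (f : ℕ → ℕ → ℝ) {i j : V}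
    (hi : i ∈ R \ C) (hj : j ∈ C \ R) :
    #(R \ C) * #(C \ R) * ∑ A ∈ powersetCard s univ with i ∈ A ∧ j ∉ A, f #(C \ A) #(R ∩ A) =
      ∑ A ∈ powersetCard s univ,
        #((R \ C) ∩ A) * #((C \ R) \ A) * f #(C \ A) #(R ∩ A) := by
  calc _ = ∑ p ∈ (R \ C) ×ˢ (C \ R),
        ∑ A ∈ powersetCard s univ with p.1 ∈ A ∧ p.2 ∉ A, f #(C \ A) #(R ∩ A) := by
        rw [sum_congr rfl fun _ hp => sum_powersetCard_filter_eq_of_mem_sdiff s f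
          (mem_product.1 hp).1 hi (mem_product.1 hp).2 hj]
        simp
    _ = ∑ A ∈ powersetCard s univ, ∑ _p ∈ ((R \ C) ∩ A) ×ˢ ((C \ R) \ A),
        f #(C \ A) #(R ∩ A) := sum_comm' fun _ _ => by
        simp only [mem_product, mem_filter, mem_inter, Finset.mem_sdiff]; tauto
    _ = _ := by simp

lemma mul_sum_excess_le_centralBinom {m k : ℕ} (hV : Fintype.card V = 2 * (m + 1))
    {R C : Finset V} (hR : #R = k) (hC : #C = k) {i j : V} (hi : i ∈ R \ C) (hj : j ∈ C \ R) :
    k * ∑ A ∈ powersetCard (m + 1) univ with i ∈ A ∧ j ∉ A, excess k #(C \ A) #(R ∩ A) ≤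
      m.centralBinom := by
  have hsdiff : #(C \ R) = #(R \ C) := card_sdiff_comm (hC.trans hR.symm)
  let x : V → ℝ := fun u => (if u ∈ R then 1 else 0) - if u ∈ C then 1 else 0
  have hx : ∀ A : Finset V, ∑ u ∈ A, x u = #(R ∩ A) - #(C ∩ A) := fun A => by
    simp [x, sum_sub_distrib, inter_comm]
  have hx_sum : ∑ u, x u = 0 := by simp [hx, hR, hC]
  have hx_sq : ∑ u, x u ^ 2 = 2 * #(R \ C) := by
    have : ∀ u, x u ^ 2 = (if u ∈ R \ C then 1 else 0) + if u ∈ C \ R then 1 else 0 := by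
      intro u
      by_cases hR : u ∈ R <;> by_cases hC : u ∈ C <;> simp [x, hR, hC]
    simp only [this, sum_add_distrib, sum_boole, filter_univ_mem, hsdiff, two_mul]
  have hmoment := two_mul_sum_powersetCard_max_sq hV hx_sum
  have hcount := card_mul_card_mul_sum_powersetCard_filter (m + 1)
    (fun r c => k * excess k r c) hi hj
  have hpos : (0 : ℝ) < #(R \ C) := by exact_mod_cast card_pos.2 ⟨i, hi⟩
  rw [mul_sum]
  refine le_of_mul_le_mul_left ?_ (mul_pos hpos hpos)
  calc _ = _ := by rw [← hcount, hsdiff]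
    _ ≤ ∑ A ∈ powersetCard (m + 1) univ, #(R \ C) * max (∑ u ∈ A, x u) 0 ^ 2 :=
        sum_le_sum fun A _ => by rw [hx]; exact card_mul_card_mul_excess_le hR hC A
    _ = #(R \ C) * #(R \ C) * m.centralBinom := by
        rw [← mul_sum]
        linear_combination (#(R \ C) : ℝ) / 2 * (hmoment.trans (by rw [hx_sq]))

end Halves

section AverageRetention

variable {V : Type*} [Fintype V] [DecidableEq V]

lemma cutEdges_compl (A : Finset V) (M : Finset (V × V)) : cutEdges Aᶜ M = cutEdges A M := by
  ext e
  simp only [cutEdges, mem_filter, mem_compl]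
  tauto

lemma leftDegree_cutEdges {A : Finset V} {i : V} (hi : i ∈ A) (M : Finset (V × V)) :
    leftDegree (cutEdges A M) i = #(({j | (i, j) ∈ M} : Finset V) \ A) := by
  rw [leftDegree_eq_card]
  congr 1
  ext
  simp [cutEdges, hi]

lemma rightDegree_cutEdges {A : Finset V} {j : V} (hj : j ∉ A) (M : Finset (V × V)) :
    rightDegree (cutEdges A M) j = #(({i | (i, j) ∈ M} : Finset V) ∩ A) := by
  rw [rightDegree_eq_card]
  congr 1
  ext
  simp [cutEdges, hj]

lemma half_centralBinom_le_sum_retention {m k : ℕ} (hV : Fintype.card V = 2 * (m + 1))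
    {M : Finset (V × V)} (hl : ∀ i, leftDegree M i = k) (hr : ∀ j, rightDegree M j = k)
    (hM : ∀ i, (i, i) ∉ M) {e : V × V} (he : e ∈ M) :
    ((m + 1).centralBinom : ℝ) / 2 ≤
      ∑ A ∈ powersetCard (m + 1) univ with (e.1 ∈ A ↔ e.2 ∉ A),
        retention (m + 1) k (cutEdges A M) e := by
  obtain ⟨i, j⟩ := e
  have hij : i ≠ j := by rintro rfl; exact hM i he
  rw [sum_powersetCard_filter_iff hV fun A => by rw [cutEdges_compl]]
  have hexcess := mul_sum_excess_le_centralBinom hV ((rightDegree_eq_card M j).symm.trans (hr j))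
    ((leftDegree_eq_card M i).symm.trans (hl i)) (i := i) (j := j)
    (by simpa [hM i] using he) (by simpa [hM j] using he)
  have hretention : ∑ A ∈ powersetCard (m + 1) univ with i ∈ A ∧ j ∉ A,
        retention (m + 1) k (cutEdges A M) (i, j) =
      m.centralBinom - 1 / (2 * (m + 1)) *
        (k * ∑ A ∈ powersetCard (m + 1) univ with i ∈ A ∧ j ∉ A,
          excess k #(({j | (i, j) ∈ M} : Finset V) \ A) #(({i | (i, j) ∈ M} : Finset V) ∩ A)) := by
    have hcard : Fintype.card V - 2 = 2 * m := by omega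
    rw [Nat.centralBinom_eq_two_mul_choose, ← hcard,
      ← card_powersetCard_filter_mem_notMem m hij, card_eq_sum_ones, Nat.cast_sum, ← mul_assoc,
      mul_sum, ← sum_sub_distrib]
    refine sum_congr rfl fun A hA => ?_
    obtain ⟨hi, hj⟩ := (mem_filter.1 hA).2
    rw [retention, leftDegree_cutEdges hi, rightDegree_cutEdges hj, one_div_mul_eq_div,
      Nat.cast_one]
  have hrec : ((m : ℝ) + 1) * (m + 1).centralBinom = 2 * (2 * m + 1) * m.centralBinom := by
    exact_mod_cast Nat.succ_mul_centralBinom_succ m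
  calc ((m + 1).centralBinom : ℝ) / 2
      = 2 * (m.centralBinom - 1 / (2 * (m + 1)) * m.centralBinom) := by
        field_simp
        linarith
    _ ≤ _ := by rw [hretention]; gcongr

lemma sum_mul_half_centralBinom_le {m k : ℕ} (hV : Fintype.card V = 2 * (m + 1))
    {M : Finset (V × V)} (hl : ∀ i, leftDegree M i = k) (hr : ∀ j, rightDegree M j = k)
    (hM : ∀ i, (i, i) ∉ M) {S : V → V → ℝ} (hS : ∀ i j, 0 ≤ S i j) :
    (∑ e ∈ M, S e.1 e.2) * ((m + 1).centralBinom / 2) ≤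
      ∑ A ∈ powersetCard (m + 1) univ, ∑ e ∈ cutEdges A M,
        S e.1 e.2 * retention (m + 1) k (cutEdges A M) e := by
  calc _ ≤ ∑ e ∈ M, S e.1 e.2 * ∑ A ∈ powersetCard (m + 1) univ with (e.1 ∈ A ↔ e.2 ∉ A),
        retention (m + 1) k (cutEdges A M) e := by
        rw [sum_mul]
        exact sum_le_sum fun e he => mul_le_mul_of_nonneg_left
          (half_centralBinom_le_sum_retention hV hl hr hM he) (hS _ _)
    _ = _ := by
        simp only [mul_sum]
        refine sum_comm' fun e A => ?_
        simp only [cutEdges, mem_filter]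
        tauto

end AverageRetention

section Assignment

variable {n k : ℕ} {S : Fin n → Fin n → ℝ}

/-- The maximum similarity of an assignment with loads `k` respecting the partition `(A, Aᶜ)`. -/
noncomputable def respectingOptSim (n k : ℕ) (S : Fin n → Fin n → ℝ) (A : Finset (Fin n)) : ℝ :=
  sSup {x : ℝ | ∃ M, IsAssignment n k M ∧ Respects A Aᶜ M ∧ simVal S M = x}

lemma simVal_nonneg (hS : ∀ i j, 0 ≤ S i j) (M : Finset (Fin n × Fin n)) : 0 ≤ simVal S M :=
  sum_nonneg fun _ _ => hS _ _

lemma respectingOptSim_nonneg (hS : ∀ i j, 0 ≤ S i j) (A : Finset (Fin n)) :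
    0 ≤ respectingOptSim n k S A :=
  Real.sSup_nonneg (by rintro _ ⟨M, -, -, rfl⟩; exact simVal_nonneg hS M)

lemma simVal_le_respectingOptSim {A : Finset (Fin n)} {M : Finset (Fin n × Fin n)}
    (hM : IsAssignment n k M) (hA : Respects A Aᶜ M) : simVal S M ≤ respectingOptSim n k S A := by
  refine le_csSup (Set.Finite.bddAbove ((Set.finite_range (simVal S)).subset ?_)) ⟨M, hM, hA, rfl⟩
  rintro _ ⟨M, -, -, rfl⟩
  exact ⟨M, rfl⟩

lemma IsAssignment.sum_retention_le_respectingOptSim {m : ℕ} {M : Finset (Fin n × Fin n)}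
    (hM : IsAssignment n k M) (hkm : k ≤ m) {A : Finset (Fin n)} (hA : #A = m) (hAc : #Aᶜ = m)
    (hS : ∀ i j, 0 ≤ S i j) :
    ∑ e ∈ cutEdges A M, S e.1 e.2 * retention m k (cutEdges A M) e ≤
      respectingOptSim n k S A := by
  obtain ⟨M', hcut, hl, hr, hle⟩ := exists_subset_cutEdges_of_half hkm hA hAc
    (fun i => (hM.1 i).le) (fun j => (hM.2.1 j).le) hS
  have hcross : ∀ e ∈ M', (e.1 ∈ A ↔ e.2 ∉ A) := fun e he => (mem_filter.1 (hcut he)).2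
  refine hle.trans (simVal_le_respectingOptSim
    ⟨hl, hr, fun i hi => iff_not_self (hcross _ hi)⟩ fun e he => ?_)
  have := hcross e he
  simp only [mem_compl]
  tauto

lemma IsAssignment.half_mul_simVal_le {M : Finset (Fin n × Fin n)} (hM : IsAssignment n k M)
    (hn : 2 ≤ n) (heven : Even n) (hkn : k ≤ n / 2) (hS : ∀ i j, 0 ≤ S i j) :
    1 / 2 * simVal S M ≤
      1 / (n.choose (n / 2) : ℝ) * ∑ A ∈ powersetCard (n / 2) univ, respectingOptSim n k S A := by
  obtain ⟨m, hnm⟩ : ∃ m, n = 2 * (m + 1) := by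
    obtain ⟨r, rfl⟩ := heven
    exact ⟨r - 1, by omega⟩
  have hcard : Fintype.card (Fin n) = 2 * (m + 1) := by rw [Fintype.card_fin, hnm]
  have hhalf : n / 2 = m + 1 := by omega
  have hchoose : n.choose (n / 2) = (m + 1).centralBinom := by
    rw [hhalf, hnm, Nat.centralBinom_eq_two_mul_choose]
  have hpos : (0 : ℝ) < (m + 1).centralBinom := by exact_mod_cast Nat.centralBinom_pos _
  rw [hchoose, hhalf, one_div_mul_eq_div _ (∑ A ∈ _, _), le_div_iff₀ hpos]
  calc 1 / 2 * simVal S M * (m + 1).centralBinom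
      = simVal S M * ((m + 1).centralBinom / 2) := by ring
    _ ≤ _ := sum_mul_half_centralBinom_le hcard hM.1 hM.2.1 hM.2.2 hS
    _ ≤ _ := sum_le_sum fun A hA => by
        rw [mem_powersetCard_univ] at hA
        have hAc : #Aᶜ = m + 1 := by rw [card_compl, hA, hcard, two_mul, Nat.add_sub_cancel]
        exact_mod_cast hM.sum_retention_le_respectingOptSim (hhalf ▸ hkn) hA hAc hS

end Assignment

theorem stmt5_general (n k : ℕ) (hn : 2 ≤ n) (heven : Even n) (hkn : k ≤ n / 2)
    (S : Fin n → Fin n → ℝ) (hS : ∀ i j, 0 ≤ S i j) :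
    (1 / 2 : ℝ) * OptSim n k S ≤
      (1 / (n.choose (n / 2) : ℝ)) *
        ∑ A₁ ∈ (Finset.univ : Finset (Fin n)).powersetCard (n / 2),
          sSup {x : ℝ | ∃ M : Finset (Fin n × Fin n),
            IsAssignment n k M ∧ Respects A₁ A₁ᶜ M ∧ simVal S M = x} := by
  rw [← le_div_iff₀' one_half_pos]
  refine Real.sSup_le ?_ (div_nonneg (mul_nonneg (by positivity) (sum_nonneg fun A _ =>
    respectingOptSim_nonneg hS A)) one_half_pos.le)
  rintro _ ⟨M, hM, rfl⟩
  rw [le_div_iff₀' one_half_pos]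
  exact hM.half_mul_simVal_le hn heven hkn hS

theorem stmt5 (n k : ℕ) (hn : 2 ≤ n) (heven : Even n) (hk : 1 ≤ k) (hkn : k ≤ n / 2)
    (S : Fin n → Fin n → ℝ) (hS : ∀ i j, 0 ≤ S i j ∧ S i j ≤ 1) :
    (1 / 2 : ℝ) * OptSim n k S ≤
      (1 / (n.choose (n / 2) : ℝ)) *
        ∑ A₁ ∈ (Finset.univ : Finset (Fin n)).powersetCard (n / 2),
          sSup {x : ℝ | ∃ M : Finset (Fin n × Fin n),
            IsAssignment n k M ∧ Respects A₁ A₁ᶜ M ∧ simVal S M = x} :=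
  stmt5_general n k hn heven hkn S fun i j => (hS i j).1
end
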